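/- Let q be a prime power with q > 2 and let S be an algebraic hypersurface of PG(6,q^2) of degree q+1 defined over GF(q^2), not containing any solid, with exactly q^11 + q^9 + q^7 + q^4 + q^2 + 1 rational points, and suppose there exists a solid Sigma_3 with |S ∩ Sigma_3| = q^4 + q^2 + 1. Then every hyperplane of PG(6,q^2) meets S either in a non-singular Hermitian variety H(5,q^2) or in a Hermitian cone with vertex a point over a non-singular Hermitian variety H(4,q^2). -/

import Mathlib

open MvPolynomial Module

/-- The set of points of the projective subspace of `PG(n-1, F)` determined by
the linear subspace `W` of `F^n`. -/
def projPts {F : Type} [Field F] {n : ℕ} (W : Submodule F (Fin n → F)) :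
    Set (Projectivization F (Fin n → F)) :=
  {P | P.submodule ≤ W}

/-- The set of `F`-rational points of the hypersurface of `PG(n-1, F)` defined by the
homogeneous polynomial `f`. -/
def hypersurfacePts {F : Type} [Field F] {n : ℕ} (f : MvPolynomial (Fin n) F) :
    Set (Projectivization F (Fin n → F)) :=
  {P | MvPolynomial.eval P.rep f = 0}


/-- `η` is a Hermitian (sesquilinear) form with respect to the involution `x ↦ x^q`:
additive in each argument, `F`-linear in the first, with `η w v = (η v w)^q`. -/
def IsHermitianForm (q : ℕ) {F : Type} [Field F] {V : Type} [AddCommGroup V] [Module F V]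
    (η : V → V → F) : Prop :=
  (∀ u v w, η (u + v) w = η u w + η v w) ∧
  (∀ u v w, η u (v + w) = η u v + η u w) ∧
  (∀ (a : F) (v w : V), η (a • v) w = a * η v w) ∧
  (∀ v w, η w v = (η v w) ^ q)

/-- The radical of the form `η` restricted to the subspace `W` has dimension `k`. -/
def HasRadicalDimOn {F : Type} [Field F] {n : ℕ}
    (η : (Fin n → F) → (Fin n → F) → F) (W : Submodule F (Fin n → F)) (k : ℕ) : Prop :=
  ∃ R : Submodule F (Fin n → F), R ≤ W ∧ Module.finrank F R = k ∧
    ∀ v ∈ W, (v ∈ R ↔ ∀ w ∈ W, η v w = 0)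

/-- `X` is the Hermitian variety of the projective subspace determined by `W` cut out by a
Hermitian form whose radical on `W` has dimension `k` (a non-singular Hermitian variety
if `k = 0`, a Hermitian cone with vertex of projective dimension `k - 1` otherwise). -/
def IsHermitianConeOn (q : ℕ) {F : Type} [Field F] {n : ℕ}
    (W : Submodule F (Fin n → F)) (k : ℕ)
    (X : Set (Projectivization F (Fin n → F))) : Prop :=
  ∃ η : (Fin n → F) → (Fin n → F) → F, IsHermitianForm q η ∧
    HasRadicalDimOn η W k ∧
    X = {P | P.submodule ≤ W ∧ η P.rep P.rep = 0}

/-!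
Let `W` be the solid meeting `S` in few points. Translating a plane of `W` around the complement of
`W`, some translate carries at least `q³` zeros of `f`; by the Stöhr–Voloch bound a plane curve of
degree `q + 1` without points at infinity has fewer. Hence every line of `W` meets `S`, and a
Bose–Burton argument makes `S ∩ W` a plane `U`. On a coset of `U` off `W` the polynomial `f` has at
most a fraction `1 / q` of zeros, which is also the average, so each coset attains the bound; this
forces `f (u + x)` to be a polynomial in the single functional `x ↦ B(u, x) ^ q`, where `B` is the
polar form of `f`. As `u` varies these polynomials share their coefficients, `f (u + x)` being
`t ^ q + c t + f u` in `t = B(u, x) ^ q`. So a scalar multiple of `f` takes values in the subfield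
of order `q`, and its polar form is a nondegenerate Hermitian form, whose radical on a hyperplane
has dimension at most one.
-/

section LineRestrict

variable {R : Type*} [CommRing R] {ι : Type*}

/-- The restriction of the polynomial `f` to the parametrized line `s ↦ v + s w`. -/
noncomputable def lineRestrict (v w : ι → R) : MvPolynomial ι R →ₐ[R] Polynomial R :=
  aeval fun i => Polynomial.C (v i) + Polynomial.C (w i) * Polynomial.X

theorem lineRestrict_C (a : R) (v w : ι → R) :
    lineRestrict v w (C a) = Polynomial.C a :=
  aeval_C _ a

theorem lineRestrict_X (i : ι) (v w : ι → R) :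
    lineRestrict v w (X i) = Polynomial.C (v i) + Polynomial.C (w i) * Polynomial.X :=
  aeval_X _ i

theorem eval_lineRestrict (f : MvPolynomial ι R) (v w : ι → R) (s : R) :
    (lineRestrict v w f).eval s = eval (v + s • w) f := by
  induction f using MvPolynomial.induction_on with
  | C a => simp only [lineRestrict_C, Polynomial.eval_C, eval_C]
  | add p r hp hr => simp only [map_add, Polynomial.eval_add, hp, hr]
  | mul_X p j hp =>
    simp only [map_mul, lineRestrict_X, Polynomial.eval_mul, Polynomial.eval_add,
      Polynomial.eval_C, Polynomial.eval_X, hp, eval_X, Pi.add_apply, Pi.smul_apply,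
      smul_eq_mul, mul_comm s]

theorem natDegree_lineRestrict_le (f : MvPolynomial ι R) (v w : ι → R) :
    (lineRestrict v w f).natDegree ≤ f.totalDegree := by
  simpa only [mul_one] using! aeval_natDegree_le (n := 1) f le_rfl
    (fun i => Polynomial.C (v i) + Polynomial.C (w i) * Polynomial.X) fun i => by compute_degree

theorem coeff_zero_lineRestrict (f : MvPolynomial ι R) (v w : ι → R) :
    (lineRestrict v w f).coeff 0 = eval v f := by
  rw [Polynomial.coeff_zero_eq_eval_zero, eval_lineRestrict, zero_smul, add_zero]

theorem derivative_lineRestrict [Fintype ι] (f : MvPolynomial ι R) (v w : ι → R) :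
    (lineRestrict v w f).derivative = ∑ i, Polynomial.C (w i) * lineRestrict v w (pderiv i f) := by
  classical
  induction f using MvPolynomial.induction_on with
  | C a =>
    rw [lineRestrict_C, Polynomial.derivative_C]
    simp only [pderiv_C, map_zero, mul_zero, Finset.sum_const_zero]
  | add p r hp hr =>
    rw [map_add, Polynomial.derivative_add]
    simp only [map_add, hp, hr, mul_add, Finset.sum_add_distrib]
  | mul_X p j hp =>
    have hX (i : ι) :
        lineRestrict v w (pderiv i (X j)) = Polynomial.C (if i = j then 1 else 0) := by
      rw [pderiv_X, ← lineRestrict_C (ι := ι) _ v w, Pi.single_apply]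
      split_ifs <;> simp_all
    have hXj : (lineRestrict v w (X j)).derivative = Polynomial.C (w j) := by
      rw [lineRestrict_X]
      simp
    rw [map_mul, Polynomial.derivative_mul, hp, hXj, Finset.sum_mul]
    simp only [pderiv_mul, map_add, map_mul, hX, mul_add,
      Finset.sum_add_distrib, mul_assoc]
    congr 1
    rw [Finset.sum_eq_single j (fun i _ hi => by simp [hi]) (by simp)]
    simp [mul_comm]

theorem coeff_one_lineRestrict [Fintype ι] (f : MvPolynomial ι R) (v w : ι → R) :
    (lineRestrict v w f).coeff 1 = ∑ i, w i * eval v (pderiv i f) := by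
  have h := congrArg (Polynomial.coeff · 0) (derivative_lineRestrict f v w)
  simpa only [Polynomial.coeff_derivative, zero_add, Nat.cast_zero, mul_one,
    Polynomial.finsetSum_coeff, Polynomial.coeff_C_mul, coeff_zero_lineRestrict] using h

theorem map_lineRestrict {S : Type*} [CommRing S] (φ : R →+* S) (f : MvPolynomial ι R)
    (v w : ι → R) : (lineRestrict v w f).map φ = lineRestrict (φ ∘ v) (φ ∘ w) (map φ f) := by
  induction f using MvPolynomial.induction_on with
  | C a => simp only [lineRestrict_C, Polynomial.map_C, map_C]
  | add p r hp hr => simp only [map_add, Polynomial.map_add, hp, hr]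
  | mul_X p j hp =>
    simp only [map_mul, lineRestrict_X, Polynomial.map_mul, Polynomial.map_add,
      Polynomial.map_C, Polynomial.map_X, hp, map_mul, map_X, Function.comp_apply]

theorem natDegree_coeff_lineRestrict_map_C_le (f : MvPolynomial ι R) (v a b : ι → R) (k : ℕ) :
    ((lineRestrict (fun i => Polynomial.C (v i))
      (fun i => Polynomial.C (a i) + Polynomial.C (b i) * Polynomial.X)
      (map Polynomial.C f)).coeff k).natDegree ≤ k := by
  induction f using MvPolynomial.induction_on generalizing k with
  | C c =>
    rw [map_C, lineRestrict_C, Polynomial.coeff_C]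
    split_ifs <;> simp
  | add p r hp hr =>
    rw [map_add, map_add, Polynomial.coeff_add]
    exact Polynomial.natDegree_add_le_of_degree_le (hp k) (hr k)
  | mul_X p j hp =>
    rw [map_mul, map_X, map_mul, lineRestrict_X, mul_add, Polynomial.coeff_add,
      Polynomial.coeff_mul_C, mul_left_comm, Polynomial.coeff_C_mul]
    refine Polynomial.natDegree_add_le_of_degree_le
      ((Polynomial.natDegree_mul_C_le _ _).trans (hp k)) ?_
    cases k with
    | zero => simp
    | succ k =>
      rw [Polynomial.coeff_mul_X, add_comm k]
      exact Polynomial.natDegree_mul_le_of_le (by compute_degree) (hp k)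

theorem exists_natDegree_le_eval_eq_coeff_lineRestrict (f : MvPolynomial ι R) (v a b : ι → R)
    (k : ℕ) : ∃ P : Polynomial R, P.natDegree ≤ k ∧
      ∀ s, P.eval s = (lineRestrict v (a + s • b) f).coeff k := by
  refine ⟨_, natDegree_coeff_lineRestrict_map_C_le f v a b k, fun s => ?_⟩
  have hC : (Polynomial.evalRingHom s).comp Polynomial.C = RingHom.id R := by
    ext
    simp
  rw [← Polynomial.coe_evalRingHom, ← Polynomial.coeff_map, map_lineRestrict, MvPolynomial.map_map,
    hC, MvPolynomial.map_id]
  congr 3 <;> ext i <;> simp [mul_comm s]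

theorem coeff_degree_lineRestrict_monomial (m : ι →₀ ℕ) (v w : ι → R) :
    (lineRestrict v w (monomial m 1)).coeff m.degree = eval w (monomial m 1) := by
  classical
  induction m using Finsupp.induction_linear with
  | zero => simp [lineRestrict]
  | add m n hm hn =>
    have hle (k : ι →₀ ℕ) : (lineRestrict v w (monomial k 1)).natDegree ≤ k.degree :=
      (natDegree_lineRestrict_le _ v w).trans (totalDegree_monomial_le k 1)
    have hmul : (monomial (m + n) 1 : MvPolynomial ι R) = monomial m 1 * monomial n 1 := by
      rw [monomial_mul, mul_one]
    rw [hmul, map_mul, map_add, Polynomial.coeff_mul_add_eq_of_natDegree_le (hle m) (hle n),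
      hm, hn, map_mul]
  | single i k =>
    have hle : (lineRestrict v w (X i)).natDegree ≤ 1 := by
      rw [lineRestrict_X]
      compute_degree
    have hpow := Polynomial.coeff_pow_of_natDegree_le hle (m := k)
    rw [mul_one] at hpow
    rw [← X_pow_eq_monomial, lineRestrict, map_pow, ← lineRestrict, Finsupp.degree_single, hpow,
      map_pow, eval_X, lineRestrict_X]
    simp [Polynomial.coeff_C]

theorem coeff_lineRestrict_eq_eval_homogeneousComponent {f : MvPolynomial ι R} {d : ℕ}
    (hf : f.totalDegree ≤ d) (v w : ι → R) :
    (lineRestrict v w f).coeff d = eval w (homogeneousComponent d f) := by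
  classical
  have hmon (m : ι →₀ ℕ) (c : R) : lineRestrict v w (monomial m c) =
      Polynomial.C c * lineRestrict v w (monomial m 1) := by
    rw [← lineRestrict_C (ι := ι) c v w, ← map_mul, C_mul_monomial, mul_one]
  nth_rw 1 [f.as_sum]
  rw [homogeneousComponent_apply, lineRestrict, map_sum, Polynomial.finsetSum_coeff, map_sum,
    Finset.sum_filter]
  refine Finset.sum_congr rfl fun m hm => ?_
  have hle := (le_totalDegree hm).trans hf
  rw [← lineRestrict, hmon, Polynomial.coeff_C_mul]
  split_ifs with h
  · rw [← h, coeff_degree_lineRestrict_monomial, ← mul_one (coeff m f), ← C_mul_monomial, map_mul,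
      eval_C, mul_one]
  · rw [Polynomial.coeff_eq_zero_of_natDegree_lt, mul_zero]
    exact ((natDegree_lineRestrict_le _ v w).trans (totalDegree_monomial_le m 1)).trans_lt
      (lt_of_le_of_ne hle h)

theorem totalDegree_pderiv_le (i : ι) {f : MvPolynomial ι R} {d : ℕ}
    (hf : f.totalDegree ≤ d + 1) : (pderiv i f).totalDegree ≤ d := by
  refine Finset.sup_le fun m hm => ?_
  rw [MvPolynomial.mem_support_iff, coeff_pderiv] at hm
  have hle := (le_totalDegree (MvPolynomial.mem_support_iff.2 (left_ne_zero_of_mul hm))).trans hf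
  rw [Finsupp.sum_add_index' (fun _ => rfl) (fun _ _ _ => rfl), Finsupp.sum_single_index rfl] at hle
  exact Nat.le_of_add_le_add_right hle

theorem homogeneousComponent_pderiv (i : ι) (f : MvPolynomial ι R) (d : ℕ) :
    homogeneousComponent d (pderiv i f) = pderiv i (homogeneousComponent (d + 1) f) := by
  ext m
  rw [coeff_homogeneousComponent, coeff_pderiv, coeff_pderiv, coeff_homogeneousComponent, map_add,
    Finsupp.degree_single]
  simp only [add_left_inj, ite_mul, zero_mul]

theorem homogeneousComponent_mul_of_totalDegree_le {f g : MvPolynomial ι R} {m n : ℕ}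
    (hf : f.totalDegree ≤ m) (hg : g.totalDegree ≤ n) :
    homogeneousComponent (m + n) (f * g) =
      homogeneousComponent m f * homogeneousComponent n g := by
  classical
  ext e
  have hzero {p : MvPolynomial ι R} {k : ℕ} (hp : p.totalDegree ≤ k) {a : ι →₀ ℕ}
      (ha : k < a.degree) : coeff a p = 0 :=
    coeff_eq_zero_of_totalDegree_lt (hp.trans_lt ha)
  have hterm (x : (ι →₀ ℕ) × (ι →₀ ℕ)) (hx : x ∈ Finset.HasAntidiagonal.antidiagonal e) :
      coeff x.1 (homogeneousComponent m f) * coeff x.2 (homogeneousComponent n g) =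
        if e.degree = m + n then coeff x.1 f * coeff x.2 g else 0 := by
    rw [← Finset.HasAntidiagonal.mem_antidiagonal.1 hx, map_add, coeff_homogeneousComponent,
      coeff_homogeneousComponent]
    rcases lt_or_ge m x.1.degree with h₁ | h₁
    · simp only [hzero hf h₁, zero_mul, ite_self]
    rcases lt_or_ge n x.2.degree with h₂ | h₂
    · simp only [hzero hg h₂, mul_zero, ite_self]
    split_ifs <;> lia
  rw [coeff_homogeneousComponent, coeff_mul, coeff_mul, Finset.sum_congr rfl hterm]
  split_ifs <;> simp

theorem eval_smul_of_isHomogeneous {f : MvPolynomial ι R} {d : ℕ}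
    (hf : f.IsHomogeneous d) (s : R) (v : ι → R) : eval (s • v) f = s ^ d * eval v f := by
  rw [eval_eq, eval_eq, Finset.mul_sum]
  refine Finset.sum_congr rfl fun m hm => ?_
  have hdeg : ∑ i ∈ m.support, m i = d := by
    rw [← hf (mem_support_iff.mp hm)]
    simp [Finsupp.weight_apply, Finsupp.sum]
  simp only [Pi.smul_apply, smul_eq_mul, mul_pow, Finset.prod_mul_distrib,
    Finset.prod_pow_eq_pow_sum, hdeg]
  ring

/-- In coordinates `(s, t)` on the plane spanned by `v` and `w`, exchanging `v` and `w` reverses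
the coefficients of the binary form `f (s v + t w)`. -/
theorem coeff_lineRestrict_comm {F : Type*} [Field F] [Fintype F] {f : MvPolynomial ι F} {d : ℕ}
    (hf : f.IsHomogeneous d) (hd : d + 1 < Fintype.card F) (v w : ι → F) {j : ℕ} (hj : j ≤ d) :
    (lineRestrict v w f).coeff j = (lineRestrict w v f).coeff (d - j) := by
  classical
  have hle (v w : ι → F) : (lineRestrict v w f).natDegree ≤ d :=
    (natDegree_lineRestrict_le f v w).trans hf.totalDegree_le
  have hroot (s : Fˣ) :
      (lineRestrict v w f - (lineRestrict w v f).reflect d).eval (s : F) = 0 := by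
    have : Invertible (s⁻¹ : F) := invertibleOfNonzero (inv_ne_zero s.ne_zero)
    have hrefl := Polynomial.eval₂_reflect_mul_pow (RingHom.id F) (s⁻¹ : F) d _ (hle w v)
    rw [invOf_eq_inv, inv_inv, ← Polynomial.eval, ← Polynomial.eval, eval_lineRestrict] at hrefl
    have hvw : v + (s : F) • w = (s : F) • (w + (s⁻¹ : F) • v) := by
      rw [smul_add, smul_smul, mul_inv_cancel₀ s.ne_zero, one_smul, add_comm]
    rw [Polynomial.eval_sub, eval_lineRestrict, hvw, eval_smul_of_isHomogeneous hf, ← hrefl,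
      inv_pow]
    field_simp
    simp
  have hreflect : lineRestrict v w f = (lineRestrict w v f).reflect d := by
    refine sub_eq_zero.1 (Polynomial.eq_zero_of_natDegree_lt_card_of_eval_eq_zero _
      Units.val_injective hroot ?_)
    rw [Fintype.card_units]
    refine (Polynomial.natDegree_sub_le_of_le (hle v w) (Polynomial.natDegree_reflect_le.trans
      (max_le le_rfl (hle w v)))).trans_lt ?_
    rw [max_self]
    lia
  rw [hreflect, Polynomial.coeff_reflect, Polynomial.revAt_le hj]

end LineRestrict

section LineDegree

open scoped Classical Finset

theorem sum_card_filter_perm {ι α : Type*} [Fintype ι] [Fintype α] (e : ι → Equiv.Perm α)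
    (p : α → Prop) [DecidablePred p] :
    ∑ a, (#{i | p (e i a)} : ℕ) = Fintype.card ι * #{a | p a} := by
  simp only [Finset.card_filter]
  rw [Finset.sum_comm]
  simp only [fun i => Equiv.sum_comp (e i) fun a => if p a then 1 else 0, Finset.sum_const,
    Finset.card_univ, smul_eq_mul]

variable {F V : Type*} [Field F] [AddCommGroup V] [Module F V] {d : ℕ} {φ τ : V → F}

/-- `φ` is a polynomial of degree at most `d` along every affine line, and its coefficient of
degree `d` depends, through `τ`, only on the direction of the line. -/
def HasLineDegree (d : ℕ) (φ τ : V → F) : Prop :=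
  ∀ u w, ∃ P : Polynomial F, P.natDegree ≤ d ∧ P.coeff d = τ w ∧ ∀ s, P.eval s = φ (u + s • w)

theorem HasLineDegree.comp_affine {V' : Type*} [AddCommGroup V'] [Module F V']
    (h : HasLineDegree d φ τ) (u : V) (A : V' →ₗ[F] V) :
    HasLineDegree d (fun x => φ (u + A x)) fun x => τ (A x) := fun x y => by
  obtain ⟨P, hP, hd, heval⟩ := h (u + A x) (A y)
  exact ⟨P, hP, hd, fun s => by simp only [heval, map_add, map_smul, add_assoc]⟩

/-- The directions along which the zero set of `φ` is a union of lines. -/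
def zeroPeriods (F : Type*) {V : Type*} [Field F] [AddCommGroup V] [Module F V] (φ : V → F) :
    Submodule F V where
  carrier := {w | ∀ z, φ z = 0 → ∀ s : F, φ (z + s • w) = 0}
  zero_mem' := fun z hz s => by rwa [smul_zero, add_zero]
  add_mem' := fun hw₁ hw₂ z hz s => by
    rw [smul_add, ← add_assoc]
    exact hw₂ _ (hw₁ z hz s) s
  smul_mem' := fun c w hw z hz s => by
    rw [smul_smul]
    exact hw z hz (s * c)

variable [Fintype F]

theorem card_filter_eval_eq_zero_le {P : Polynomial F} (hP : P ≠ 0) :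
    #{s | P.eval s = 0} ≤ P.natDegree :=
  Polynomial.card_le_degree_of_subset_roots fun _ hs =>
    (Polynomial.mem_roots hP).2 (Finset.mem_filter.1 hs).2

theorem card_units_filter_add_ite (p : F → Prop) :
    #{s : Fˣ | p s} + (if p 0 then 1 else 0) = #{s | p s} := by
  rw [← Finset.filter_union_filter_not_eq (· ≠ 0) ({s | p s} : Finset F),
    Finset.card_union_of_disjoint (Finset.disjoint_filter_filter_not _ _ _)]
  congr 1
  · exact Finset.card_bij (fun s _ => (s : F)) (by simp +contextual)
      (fun _ _ _ _ h => Units.ext h) fun s hs => by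
      obtain ⟨hs, hs0⟩ := Finset.mem_filter.1 hs
      exact ⟨Units.mk0 s hs0, by simpa using hs, rfl⟩
  · simp only [not_not, Finset.filter_filter]
    split_ifs with h
    · rw [eq_comm, Finset.card_eq_one]
      exact ⟨0, by ext s; simp +contextual [h]⟩
    · rw [eq_comm, Finset.card_eq_zero, Finset.filter_eq_empty_iff]
      rintro s - ⟨hs, rfl⟩
      exact h hs

namespace HasLineDegree

theorem card_line_le_of_top_ne_zero (h : HasLineDegree d φ τ) {w : V} (hw : τ w ≠ 0) (u : V) :
    #{s : F | φ (u + s • w) = 0} ≤ d := by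
  obtain ⟨P, hP, hd, heval⟩ := h u w
  have hP0 : P ≠ 0 := fun h0 => hw (by rw [← hd, h0, Polynomial.coeff_zero])
  simpa only [heval] using (card_filter_eval_eq_zero_le hP0).trans hP

theorem card_line_le (h : HasLineDegree d φ τ) {u w : V} (hu : ∃ s : F, φ (u + s • w) ≠ 0) :
    #{s : F | φ (u + s • w) = 0} ≤ if τ w = 0 then d - 1 else d := by
  obtain ⟨P, hP, hd, heval⟩ := h u w
  obtain ⟨s, hs⟩ := hu
  have hP0 : P ≠ 0 := by
    rintro rfl
    exact hs (by rw [← heval, Polynomial.eval_zero])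
  simp only [← heval]
  refine (card_filter_eval_eq_zero_le hP0).trans ?_
  split_ifs with hw
  · exact Polynomial.natDegree_le_pred hP (hd.trans hw)
  · exact hP

theorem card_unit_line_le (h : HasLineDegree d φ τ) {u : V} (hu : φ u ≠ 0) (w : V) :
    #{s : Fˣ | φ (u + (s : F) • w) = 0} ≤ if τ w = 0 then d - 1 else d := by
  have hunits := card_units_filter_add_ite fun s : F => φ (u + s • w) = 0
  exact (hunits.symm ▸ Nat.le_add_right _ _).trans
    (h.card_line_le ⟨0, by rwa [zero_smul, add_zero]⟩)

theorem card_unit_line_add_one {u : V} (hu : φ u = 0) (w : V) :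
    #{s : Fˣ | φ (u + (s : F) • w) = 0} + 1 = #{s : F | φ (u + s • w) = 0} := by
  rw [← card_units_filter_add_ite fun s : F => φ (u + s • w) = 0,
    if_pos (by rwa [zero_smul, add_zero])]

theorem top_eq_zero (h : HasLineDegree d φ τ) (hd : d < Fintype.card F) {u w : V}
    (hfull : ∀ s : F, φ (u + s • w) = 0) : τ w = 0 := by
  obtain ⟨P, hP, hPd, heval⟩ := h u w
  rw [← hPd, Polynomial.eq_zero_of_natDegree_lt_card_of_eval_eq_zero P Function.injective_id
    (fun s => (heval s).trans (hfull s)) (hP.trans_lt hd), Polynomial.coeff_zero]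

theorem top_smul (h : HasLineDegree d φ τ) (hd : d < Fintype.card F) (c : F) (w : V) :
    τ (c • w) = c ^ d * τ w := by
  obtain ⟨P, hP, hPd, heval⟩ := h 0 w
  obtain ⟨R, hR, hRd, hReval⟩ := h 0 (c • w)
  have hcomp : (P.comp (Polynomial.C c * Polynomial.X)).natDegree ≤ d :=
    (Polynomial.natDegree_comp_le.trans (Nat.mul_le_mul hP
      (by compute_degree))).trans (mul_one d).le
  have hRP : R = P.comp (Polynomial.C c * Polynomial.X) := by
    refine Polynomial.eq_of_degree_sub_lt_of_eval_finset_eq Finset.univ ?_ fun s _ => ?_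
    · exact (Polynomial.degree_le_of_natDegree_le (Polynomial.natDegree_sub_le_of_le hR
        hcomp)).trans_lt (by simpa using hd)
    · rw [hReval, Polynomial.eval_comp, heval, Polynomial.eval_mul, Polynomial.eval_C,
        Polynomial.eval_X, smul_smul, mul_comm]
  rw [← hRd, hRP, Polynomial.comp_C_mul_X_coeff, hPd, mul_comm]

end HasLineDegree

theorem two_mul_card_le_of_forall_smul_mem {A : Finset V} {w₁ w₂ : V}
    (hind : LinearIndependent F ![w₁, w₂]) (h₁ : ∀ c : F, c • w₁ ∈ A) (h₂ : ∀ c : F, c • w₂ ∈ A) :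
    2 * Fintype.card F ≤ #A + 1 := by
  set L : V → Finset V := fun w => Finset.univ.image fun c : F => c • w with hL
  have hcard (w : V) (hw : w ≠ 0) : #(L w) = Fintype.card F :=
    (Finset.card_image_of_injective _ (smul_left_injective F hw)).trans Finset.card_univ
  have hunion : #(L w₁ ∪ L w₂) ≤ #A := Finset.card_le_card <| Finset.union_subset
    (Finset.image_subset_iff.2 fun c _ => h₁ c) (Finset.image_subset_iff.2 fun c _ => h₂ c)
  have hinter : #(L w₁ ∩ L w₂) ≤ 1 := by
    refine Finset.card_le_one_iff_subset_singleton.2 ⟨0, fun w hw => ?_⟩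
    simp only [hL, Finset.mem_inter, Finset.mem_image, Finset.mem_univ, true_and] at hw
    obtain ⟨⟨a, rfl⟩, b, hab⟩ := hw
    have ha := (LinearIndependent.pair_iff.1 hind a (-b) (by rw [neg_smul, hab, add_neg_cancel])).1
    rw [ha, zero_smul, Finset.mem_singleton]
  have hcount := Finset.card_union_add_card_inter (L w₁) (L w₂)
  rw [hcard w₁ (hind.ne_zero 0), hcard w₂ (hind.ne_zero 1)] at hcount
  lia

variable [Fintype V]

theorem sum_card_parallel (φ : V → F) (w : V) :
    ∑ u, #{s : F | φ (u + s • w) = 0} = Fintype.card F * #{z | φ z = 0} :=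
  sum_card_filter_perm (fun s : F => Equiv.addRight (s • w)) fun z => φ z = 0

theorem sum_card_pencil (φ : V → F) (u : V) :
    ∑ w, #{s : Fˣ | φ (u + (s : F) • w) = 0} = (Fintype.card F - 1) * #{z | φ z = 0} := by
  rw [← Fintype.card_units]
  exact sum_card_filter_perm (fun s : Fˣ => (MulAction.toPerm s).trans (Equiv.addLeft u))
    fun z => φ z = 0

namespace HasLineDegree

theorem card_mul_card_le (h : HasLineDegree d φ τ) {w : V} (hw : τ w ≠ 0) :
    Fintype.card F * #{z | φ z = 0} ≤ d * Fintype.card V := by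
  rw [← sum_card_parallel φ w, mul_comm d, ← smul_eq_mul, ← Finset.card_univ]
  exact Finset.sum_le_card_nsmul _ _ _ fun u _ => h.card_line_le_of_top_ne_zero hw u

theorem card_mul_card_le_of_top_eq_zero (h : HasLineDegree d φ τ) (hτ : ∀ w, τ w = 0) {u : V}
    (hu : φ u ≠ 0) : (Fintype.card F - 1) * #{z | φ z = 0} ≤ (d - 1) * Fintype.card V := by
  rw [← sum_card_pencil φ u, mul_comm (d - 1), ← smul_eq_mul, ← Finset.card_univ]
  exact Finset.sum_le_card_nsmul _ _ _ fun w _ => by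
    simpa only [hτ, if_true] using h.card_unit_line_le hu w

/-- Schwartz–Zippel. When `τ` vanishes identically one counts along the pencil of lines through
a point where `φ` does not vanish, instead of along a parallel class. -/
theorem card_mul_card_le_of_ne_zero (h : HasLineDegree d φ τ) (hd : 1 ≤ d)
    (hdF : d ≤ Fintype.card F) {u : V} (hu : φ u ≠ 0) :
    Fintype.card F * #{z | φ z = 0} ≤ d * Fintype.card V := by
  by_cases hτ : ∃ w, τ w ≠ 0
  · exact h.card_mul_card_le hτ.choose_spec
  push Not at hτ
  have hpencil := h.card_mul_card_le_of_top_eq_zero hτ hu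
  obtain ⟨e, rfl⟩ := Nat.exists_eq_add_of_le' hd
  obtain ⟨k, hk⟩ : ∃ k, Fintype.card F = k + 2 := Nat.exists_eq_add_of_le' Fintype.one_lt_card
  rw [hk] at hpencil hdF ⊢
  have hV : e * Fintype.card V ≤ (k + 1) * Fintype.card V := Nat.mul_le_mul_right _ (by lia)
  refine Nat.le_of_mul_le_mul_left (c := k + 1) ?_ k.succ_pos
  calc (k + 1) * ((k + 2) * #{z | φ z = 0}) = (k + 2) * ((k + 1) * #{z | φ z = 0}) := by ring
    _ ≤ (k + 2) * (e * Fintype.card V) := Nat.mul_le_mul_left _ hpencil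
    _ ≤ (k + 1) * ((e + 1) * Fintype.card V) := by nlinarith

theorem exists_top_ne_zero (h : HasLineDegree d φ τ) (hd : 1 ≤ d) (hdF : d < Fintype.card F)
    (hN : Fintype.card F * #{z | φ z = 0} = d * Fintype.card V) : ∃ w, τ w ≠ 0 := by
  by_contra! hτ
  have hV : 0 < Fintype.card V := Fintype.card_pos
  obtain ⟨u, hu⟩ : ∃ u, φ u ≠ 0 := by
    by_contra! hall
    simp only [hall, Finset.filter_true, Finset.card_univ] at hN
    exact hdF.ne' (Nat.eq_of_mul_eq_mul_right hV hN)
  have hpencil := h.card_mul_card_le_of_top_eq_zero hτ hu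
  zify [hd, hd.trans hdF.le] at *
  nlinarith [mul_le_mul_of_nonneg_left hpencil (Nat.cast_nonneg (α := ℤ) (Fintype.card F)),
    mul_pos (sub_pos.2 hdF) hV]

theorem card_line_eq (h : HasLineDegree d φ τ)
    (hN : Fintype.card F * #{z | φ z = 0} = d * Fintype.card V) {w : V} (hw : τ w ≠ 0) (u : V) :
    #{s : F | φ (u + s • w) = 0} = d := by
  refine (Finset.sum_eq_sum_iff_of_le fun u _ => h.card_line_le_of_top_ne_zero hw u).1 ?_ u
    (Finset.mem_univ u)
  rw [sum_card_parallel, hN, Finset.sum_const, Finset.card_univ, smul_eq_mul, mul_comm]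

theorem card_le_of_forall_exists_ne_zero (h : HasLineDegree d φ τ) {u : V} (hu : φ u = 0)
    (hline : ∀ w ≠ 0, ∃ s : F, φ (u + s • w) ≠ 0) :
    (Fintype.card F - 1) * #{z | φ z = 0} ≤
      (Fintype.card F - 1) + (Fintype.card V - 1) * (d - 1) := by
  rw [← sum_card_pencil φ u, ← Finset.add_sum_erase _ _ (Finset.mem_univ (0 : V))]
  refine add_le_add ?_ ?_
  · rw [← Fintype.card_units, ← Finset.card_univ]
    exact Finset.card_filter_le _ _
  · rw [← Finset.card_univ, ← Finset.card_erase_of_mem (Finset.mem_univ (0 : V)), ← smul_eq_mul]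
    refine Finset.sum_le_card_nsmul _ _ _ fun w hw => ?_
    have hle := h.card_line_le (hline w (Finset.ne_of_mem_erase hw))
    rw [← card_unit_line_add_one hu] at hle
    split_ifs at hle <;> lia

theorem card_top_eq_zero_add_le (h : HasLineDegree d φ τ) (hd : 1 ≤ d) {u : V} (hu : φ u ≠ 0) :
    (Fintype.card F - 1) * #{z | φ z = 0} + #{w | τ w = 0} ≤ d * (Fintype.card V - 1) + 1 := by
  have hle (w : V) : #{s : Fˣ | φ (u + (s : F) • w) = 0} + (if τ w = 0 then 1 else 0) ≤ d := by
    have := h.card_unit_line_le hu w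
    split_ifs at this ⊢ <;> lia
  rw [← sum_card_pencil φ u, Finset.card_filter, ← Finset.sum_add_distrib,
    ← Finset.sum_erase_add _ _ (Finset.mem_univ (0 : V))]
  refine add_le_add ?_ ?_
  · rw [← Finset.card_univ, ← Finset.card_erase_of_mem (Finset.mem_univ (0 : V)), mul_comm,
      ← smul_eq_mul]
    exact Finset.sum_le_card_nsmul _ _ _ fun w _ => hle w
  · simp only [smul_zero, add_zero, hu, Finset.filter_false, Finset.card_empty, zero_add]
    split_ifs <;> simp

theorem card_full_line_add_le (h : HasLineDegree d φ τ) (hdF : d < Fintype.card F)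
    (hN : Fintype.card F * #{z | φ z = 0} = d * Fintype.card V) {u : V} (hu : φ u = 0) :
    #{w | ∀ s : F, φ (u + s • w) = 0} * (Fintype.card F - 1) + #{w | τ w ≠ 0} * (d - 1) ≤
      (Fintype.card F - 1) * #{z | φ z = 0} := by
  have hdisj : Disjoint ({w | ∀ s : F, φ (u + s • w) = 0} : Finset V)
      ({w | τ w ≠ 0} : Finset V) := Finset.disjoint_left.2 fun w hw hw' =>
    (Finset.mem_filter.1 hw').2 (h.top_eq_zero hdF (Finset.mem_filter.1 hw).2)
  rw [← sum_card_pencil φ u, ← smul_eq_mul, ← smul_eq_mul]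
  refine (add_le_add (Finset.card_nsmul_le_sum _ _ _ fun w hw => ?_)
    (Finset.card_nsmul_le_sum _ _ _ fun w hw => ?_)).trans
    ((Finset.sum_union hdisj).symm.trans_le
      (Finset.sum_le_univ_sum_of_nonneg fun _ => Nat.zero_le _))
  · simp only [(Finset.mem_filter.1 hw).2, Finset.filter_true, Finset.card_univ,
      Fintype.card_units, le_refl]
  · have hunits := card_unit_line_add_one (F := F) hu w
    rw [h.card_line_eq hN (Finset.mem_filter.1 hw).2] at hunits
    lia

/-- In a plane with the maximal number `d Q` of zeros (`Q` the order of `F`), counting along the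
pencil of lines through a zero shows that it lies on at most one line of zeros. -/
theorem not_linearIndependent_of_full_lines (h : HasLineDegree d φ τ) (hd : 2 ≤ d)
    (hdF : d * d ≤ Fintype.card F) (hV : Fintype.card V = Fintype.card F ^ 2)
    (hN : #{z | φ z = 0} = d * Fintype.card F) {z w₁ w₂ : V}
    (h₁ : ∀ s : F, φ (z + s • w₁) = 0) (h₂ : ∀ s : F, φ (z + s • w₂) = 0) :
    ¬ LinearIndependent F ![w₁, w₂] := by
  intro hind
  set Q := Fintype.card F with hQ
  have hdQ : d < Q := by nlinarith
  have hfull : 2 * Q ≤ #{w | ∀ s : F, φ (z + s • w) = 0} + 1 :=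
    two_mul_card_le_of_forall_smul_mem hind (by simp [smul_smul, h₁]) (by simp [smul_smul, h₂])
  have hsum := h.card_full_line_add_le hdQ (by rw [hN, hV]; ring) (by simpa using h₁ 0 : φ z = 0)
  have htop : (Q - 1) * (d * Q) + #{w | τ w = 0} ≤ d * (Q ^ 2 - 1) + 1 := by
    obtain ⟨u, hu⟩ : ∃ u, φ u ≠ 0 := by
      by_contra! hall
      simp only [hall, Finset.filter_true, Finset.card_univ, hV] at hN
      nlinarith
    simpa only [hN, hV] using h.card_top_eq_zero_add_le (by lia) hu
  have hcompl : #{w | τ w = 0} + #{w | τ w ≠ 0} = Q ^ 2 := by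
    rw [Finset.card_filter_add_card_filter_not, Finset.card_univ, hV]
  rw [hN, ← hQ] at hsum
  zify [show 1 ≤ Q by lia, show 1 ≤ Q ^ 2 by nlinarith, show 1 ≤ d by lia] at *
  have hM : ((Q : ℤ) - 1) * (Q + 1 - d) ≤ #{w | τ w ≠ 0} := by linarith
  nlinarith [mul_le_mul_of_nonneg_right hM (show (0 : ℤ) ≤ d - 1 by lia),
    mul_le_mul_of_nonneg_right hfull (show (0 : ℤ) ≤ Q - 1 by lia)]

theorem exists_full_line (h : HasLineDegree d φ τ) (hd : 1 ≤ d)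
    (hdF : d < Fintype.card F) (hV : Fintype.card V = Fintype.card F ^ 2)
    (hN : #{z | φ z = 0} = d * Fintype.card F) {z : V} (hz : φ z = 0) :
    ∃ w ≠ 0, ∀ s : F, φ (z + s • w) = 0 := by
  by_contra! hline
  have hle := h.card_le_of_forall_exists_ne_zero hz hline
  rw [hN, hV] at hle
  zify [show 1 ≤ Fintype.card F by lia, show 1 ≤ Fintype.card F ^ 2 by nlinarith, hd] at hle
  have hgap : 0 < ((Fintype.card F : ℤ) - 1) * (Fintype.card F - d) :=
    mul_pos (by lia) (by lia)
  linarith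

theorem mem_span_of_full_lines (h : HasLineDegree d φ τ) (hd : 2 ≤ d)
    (hdF : d * d ≤ Fintype.card F) (hV : finrank F V = 2)
    (hN : #{z | φ z = 0} = d * Fintype.card F) {z₁ z₂ w₁ w₂ : V}
    (hw₁ : w₁ ≠ 0) (h₁ : ∀ s : F, φ (z₁ + s • w₁) = 0) (h₂ : ∀ s : F, φ (z₂ + s • w₂) = 0) :
    w₂ ∈ Submodule.span F {w₁} := by
  by_contra hw₂
  have hind : LinearIndependent F ![w₁, w₂] := (LinearIndependent.pair_iff' hw₁).2 fun a ha =>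
    hw₂ (Submodule.mem_span_singleton.2 ⟨a, ha⟩)
  obtain ⟨a, b, hab⟩ : ∃ a b : F, a • w₁ + b • w₂ = z₂ - z₁ := by
    rw [← Submodule.mem_span_pair, ← Matrix.range_cons_cons_empty w₁ w₂ ![],
      hind.span_eq_top_of_card_eq_finrank' (by simp [hV])]
    exact Submodule.mem_top
  refine h.not_linearIndependent_of_full_lines hd hdF (hV ▸ Module.card_eq_pow_finrank) hN
    (z := z₁ + a • w₁) (fun s => ?_) (fun s => ?_) hind
  · rw [add_assoc, ← add_smul, h₁]
  · have hmeet : z₁ + a • w₁ + s • w₂ = z₂ + (s - b) • w₂ := by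
      rw [sub_smul, ← sub_eq_zero, ← sub_eq_zero.2 hab]
      abel
    rw [hmeet, h₂]

theorem exists_direction (h : HasLineDegree d φ τ) (hd : 2 ≤ d)
    (hdF : d * d ≤ Fintype.card F) (hV : finrank F V = 2)
    (hN : #{z | φ z = 0} = d * Fintype.card F) :
    ∃ w₀ ≠ 0, (∀ z, φ z = 0 → ∀ s : F, φ (z + s • w₀) = 0) ∧
      ∀ w, τ w = 0 → w ∈ Submodule.span F {w₀} := by
  have hdQ : d < Fintype.card F := by nlinarith
  have hcardV : Fintype.card V = Fintype.card F ^ 2 := hV ▸ Module.card_eq_pow_finrank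
  have hfull {z : V} := h.exists_full_line (z := z) (by lia) hdQ hcardV hN
  obtain ⟨z₀, hz₀⟩ : ∃ z, φ z = 0 := by
    by_contra! hne
    simp only [hne, Finset.filter_false, Finset.card_empty] at hN
    nlinarith
  obtain ⟨w₀, hw₀, hline₀⟩ := hfull hz₀
  have hspan {z w : V} (hline : ∀ s : F, φ (z + s • w) = 0) : w ∈ Submodule.span F {w₀} :=
    h.mem_span_of_full_lines hd hdF hV hN hw₀ hline₀ hline
  refine ⟨w₀, hw₀, fun z hz s => ?_, fun w hw => ?_⟩
  · obtain ⟨w, hw0, hline⟩ := hfull hz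
    obtain ⟨a, rfl⟩ := Submodule.mem_span_singleton.1 (hspan hline)
    have ha : a ≠ 0 := fun ha => hw0 (by rw [ha, zero_smul])
    simpa only [smul_smul, div_mul_cancel₀ s ha] using hline (s / a)
  · by_contra hwspan
    have hle : Fintype.card F * #{z | φ z = 0} ≤ (d - 1) * Fintype.card V := by
      rw [← sum_card_parallel φ w, mul_comm (d - 1), ← smul_eq_mul, ← Finset.card_univ]
      refine Finset.sum_le_card_nsmul _ _ _ fun u _ => ?_
      have hu : ∃ s : F, φ (u + s • w) ≠ 0 := by
        by_contra! hline
        exact hwspan (hspan hline)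
      simpa only [if_pos hw] using h.card_line_le hu
    rw [hN, hcardV] at hle
    obtain ⟨e, rfl⟩ := Nat.exists_eq_add_of_le' hd
    simp only [Nat.add_succ_sub_one] at hle
    nlinarith

theorem card_zeros_plane (h : HasLineDegree d φ τ)
    (hN : Fintype.card F * #{z | φ z = 0} = d * Fintype.card V) {v : V} (hv : τ v ≠ 0)
    (u w : V) : #{p : F × F | φ (u + (p.1 • v + p.2 • w)) = 0} = d * Fintype.card F := by
  have hsum := sum_card_parallel (fun p : F × F => φ (u + (p.1 • v + p.2 • w))) ((1 : F), (0 : F))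
  have hline (p : F × F) : #{s : F | φ (u + ((p + s • ((1 : F), (0 : F))).1 • v +
      (p + s • ((1 : F), (0 : F))).2 • w)) = 0} = d := by
    rw [← h.card_line_eq hN hv (u + (p.1 • v + p.2 • w))]
    congr! 4 with s
    simp only [Prod.smul_mk, smul_eq_mul, mul_one, mul_zero, Prod.fst_add, Prod.snd_add, add_zero]
    module
  simp only [hline, Finset.sum_const, Finset.card_univ, Fintype.card_prod, smul_eq_mul] at hsum
  exact Nat.eq_of_mul_eq_mul_left Fintype.card_pos (by rw [← hsum]; ring)

theorem exists_plane_direction (h : HasLineDegree d φ τ) (hd : 2 ≤ d)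
    (hdF : d * d ≤ Fintype.card F)
    (hN : Fintype.card F * #{z | φ z = 0} = d * Fintype.card V) {v : V} (hv : τ v ≠ 0)
    {u : V} (hu : φ u = 0) (w : V) :
    ∃ a b : F, b ≠ 0 ∧ (∀ s : F, φ (u + s • (a • v + b • w)) = 0) ∧
      (τ w = 0 → a = 0) := by
  have hplane := h.comp_affine u
    ((LinearMap.toSpanSingleton F V v).coprod (LinearMap.toSpanSingleton F V w))
  simp only [LinearMap.coprod_apply, LinearMap.toSpanSingleton_apply] at hplane
  obtain ⟨⟨a, b⟩, hab, hperiod, htop⟩ := hplane.exists_direction hd hdF (by simp)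
    (h.card_zeros_plane hN hv u w)
  have hfull (s : F) : φ (u + s • (a • v + b • w)) = 0 := by
    simpa [smul_smul] using hperiod 0 (by simpa using hu) s
  refine ⟨a, b, ?_, hfull, fun hw => ?_⟩
  · rintro rfl
    have hdQ : d < Fintype.card F := by nlinarith
    have ha : a ≠ 0 := by
      rintro rfl
      exact hab rfl
    have htop0 := h.top_eq_zero hdQ hfull
    rw [zero_smul, add_zero, h.top_smul hdQ] at htop0
    exact mul_ne_zero (pow_ne_zero d ha) hv htop0
  · obtain ⟨c, hc⟩ := Submodule.mem_span_singleton.1 (htop (0, 1) (by simpa using hw))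
    obtain ⟨hca, hcb⟩ := Prod.mk.inj hc
    exact (mul_eq_zero.1 hca).resolve_left (left_ne_zero_of_mul_eq_one hcb)

theorem mem_zeroPeriods_iff (h : HasLineDegree d φ τ) (hd : 2 ≤ d)
    (hdF : d * d ≤ Fintype.card F)
    (hN : Fintype.card F * #{z | φ z = 0} = d * Fintype.card V) {v : V} (hv : τ v ≠ 0) {w : V} :
    w ∈ zeroPeriods F φ ↔ τ w = 0 := by
  refine ⟨fun hw => ?_, fun hw z hz s => ?_⟩
  · have hpos : 0 < #{z | φ z = 0} := by
      have : 0 < d * Fintype.card V := Nat.mul_pos (by lia) Fintype.card_pos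
      exact Nat.pos_of_mul_pos_left (hN ▸ this)
    obtain ⟨z, hz⟩ := Finset.card_pos.1 hpos
    exact h.top_eq_zero (by nlinarith) (hw z (Finset.mem_filter.1 hz).2)
  · obtain ⟨a, b, hb, hline, ha⟩ := h.exists_plane_direction hd hdF hN hv hz w
    have := hline (s / b)
    rwa [ha hw, zero_smul, zero_add, smul_smul, div_mul_cancel₀ s hb] at this

theorem exists_sub_smul_mem_zeroPeriods (h : HasLineDegree d φ τ) (hd : 2 ≤ d)
    (hdF : d * d ≤ Fintype.card F)
    (hN : Fintype.card F * #{z | φ z = 0} = d * Fintype.card V) {v : V} (hv : τ v ≠ 0) (w : V) :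
    ∃ c : F, w - c • v ∈ zeroPeriods F φ := by
  have hdQ : d < Fintype.card F := by nlinarith
  obtain ⟨z, hz⟩ : ∃ z, φ z = 0 := by
    by_contra! hne
    have := Nat.mul_pos (show 0 < d by lia) (Fintype.card_pos (α := V))
    simp [hne, ← hN] at this
  obtain ⟨a, b, hb, hline, -⟩ := h.exists_plane_direction hd hdF hN hv hz w
  refine ⟨-(b⁻¹ * a), (h.mem_zeroPeriods_iff hd hdF hN hv).2 ?_⟩
  have hw : w - -(b⁻¹ * a) • v = b⁻¹ • (a • v + b • w) := by
    rw [smul_add, smul_smul, smul_smul, inv_mul_cancel₀ hb]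
    module
  rw [hw, h.top_smul hdQ, h.top_eq_zero hdQ hline, mul_zero]

/-- A function of line degree `d` with the maximal number of zeros is a polynomial in one linear
functional, whose kernel consists of the periods of the zero set. -/
theorem exists_eq_eval_dual (h : HasLineDegree d φ τ) (hd : 2 ≤ d)
    (hdF : d * d ≤ Fintype.card F)
    (hN : Fintype.card F * #{z | φ z = 0} = d * Fintype.card V) :
    ∃ (L : Dual F V) (G : Polynomial F), G.natDegree = d ∧ #{s | G.eval s = 0} = d ∧
      ∀ x, φ x = G.eval (L x) := by
  have hdQ : d < Fintype.card F := by nlinarith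
  obtain ⟨v, hv⟩ := h.exists_top_ne_zero (by lia) hdQ hN
  have hvN : v ∉ zeroPeriods F φ := fun hmem => hv ((h.mem_zeroPeriods_iff hd hdF hN hv).1 hmem)
  obtain ⟨L₀, hL₀v, hL₀⟩ := Submodule.exists_le_ker_of_notMem hvN
  obtain ⟨L, hLv, hL⟩ : ∃ L : Dual F V, L v = 1 ∧ zeroPeriods F φ ≤ LinearMap.ker L :=
    ⟨(L₀ v)⁻¹ • L₀, inv_mul_cancel₀ hL₀v, fun w hw => by simp [LinearMap.mem_ker.1 (hL₀ hw)]⟩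
  have hperiod (x : V) : x - L x • v ∈ zeroPeriods F φ := by
    obtain ⟨c, hc⟩ := h.exists_sub_smul_mem_zeroPeriods hd hdF hN hv x
    have hLx : L x = c := by
      simpa [hLv, sub_eq_zero] using LinearMap.mem_ker.1 (hL hc)
    rwa [hLx]
  obtain ⟨G, hG, hGd, hGeval⟩ := h 0 v
  have hroots : #{s | G.eval s = 0} = d := by
    simpa only [hGeval] using h.card_line_eq hN hv 0
  refine ⟨L, G, le_antisymm hG (Polynomial.le_natDegree_of_ne_zero (hGd ▸ hv)), hroots,
    fun x => ?_⟩
  obtain ⟨P, hP, hPd, hPeval⟩ := h (x - L x • v) v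
  have hPG : P = G := by
    refine sub_eq_zero.1 (Polynomial.eq_zero_of_natDegree_lt_card_of_eval_eq_zero' _
      {s | G.eval s = 0} (fun s hs => ?_) (hroots.symm ▸ ?_))
    · have hs0 := (Finset.mem_filter.1 hs).2
      have hshift := hperiod x _ (hGeval s ▸ hs0) 1
      rw [Polynomial.eval_sub, hs0, sub_zero, hPeval, ← hshift]
      congr 1
      module
    · refine (Polynomial.natDegree_le_pred (Polynomial.natDegree_sub_le_of_le hP hG |>.trans_eq
        (max_self d)) ?_).trans_lt (by lia)
      rw [Polynomial.coeff_sub, hPd, hGd, sub_self]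
  rw [← hPG, hPeval, sub_add_cancel]

end HasLineDegree

end LineDegree

section FrobeniusTangent

variable {F : Type*} [Field F] [Fintype F]

theorem derivative_eq_zero_of_dvd_of_forall_eval_ne_zero {P : Polynomial F}
    (hroot : ∀ c, P.eval c ≠ 0)
    (hdvd : P ∣ (Polynomial.X ^ Fintype.card F - Polynomial.X) * P.derivative) :
    P.derivative = 0 := by
  have hcard : 1 < Fintype.card F := Fintype.one_lt_card
  have hsplit : Polynomial.X ^ Fintype.card F - Polynomial.X =
      ∏ c : F, (Polynomial.X - Polynomial.C c) := by
    rw [← Polynomial.prod_multiset_X_sub_C_of_monic_of_roots_card_eq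
      (Polynomial.monic_X_pow_sub (by rw [Polynomial.degree_X]; exact_mod_cast hcard)),
      FiniteField.roots_X_pow_card_sub_X]
    · rfl
    · rw [FiniteField.roots_X_pow_card_sub_X, FiniteField.X_pow_card_sub_X_natDegree_eq F hcard]
      rfl
  have hcoprime : IsCoprime P (Polynomial.X ^ Fintype.card F - Polynomial.X) := by
    rw [hsplit]
    refine IsCoprime.prod_right fun c _ => isCoprime_comm.2 ?_
    rw [(Polynomial.irreducible_X_sub_C c).coprime_iff_not_dvd, Polynomial.dvd_iff_isRoot]
    exact hroot c
  by_contra hne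
  have hconst : P.natDegree ≠ 0 := fun h =>
    hne (by rw [Polynomial.eq_C_of_natDegree_eq_zero h, Polynomial.derivative_C])
  exact (Polynomial.natDegree_derivative_lt hconst).not_ge
    (Polynomial.natDegree_le_of_dvd (hcoprime.dvd_of_dvd_mul_left hdvd) hne)

/-- The polynomial `∑ᵢ (Xᵢ^Q - Xᵢ) ∂ᵢ g` with `Q = card F`: it vanishes at a point of the
hypersurface `g = 0` when the Frobenius image of the point lies in the tangent space there. -/
noncomputable def frobeniusTangent {ι : Type*} [Fintype ι] (g : MvPolynomial ι F) :
    MvPolynomial ι F :=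
  ∑ i, (X i ^ Fintype.card F - X i) * pderiv i g

variable {ι : Type*}

theorem totalDegree_X_pow_card_sub_X_le (i : ι) :
    (X i ^ Fintype.card F - X i : MvPolynomial ι F).totalDegree ≤ Fintype.card F := by
  refine (totalDegree_sub _ _).trans (max_le ?_ ?_)
  · rw [totalDegree_X_pow]
  · rw [totalDegree_X]
    exact Fintype.card_pos

variable [Fintype ι] {g : MvPolynomial ι F} {d : ℕ}

theorem totalDegree_frobeniusTangent_le (hg : g.totalDegree ≤ d + 1) :
    (frobeniusTangent g).totalDegree ≤ Fintype.card F + d :=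
  totalDegree_finsetSum_le fun i _ => (totalDegree_mul _ _).trans
    (add_le_add (totalDegree_X_pow_card_sub_X_le i) (totalDegree_pderiv_le i hg))

theorem homogeneousComponent_frobeniusTangent (hg : g.totalDegree ≤ d + 1) :
    homogeneousComponent (Fintype.card F + d) (frobeniusTangent g) =
      ∑ i, X i ^ Fintype.card F * pderiv i (homogeneousComponent (d + 1) g) := by
  have hX (i : ι) : homogeneousComponent (Fintype.card F)
      (X i ^ Fintype.card F - X i : MvPolynomial ι F) = X i ^ Fintype.card F := by
    rw [map_sub, homogeneousComponent_eq_self (isHomogeneous_X_pow i _),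
      homogeneousComponent_eq_zero, sub_zero]
    rw [totalDegree_X]
    exact Fintype.one_lt_card
  rw [frobeniusTangent, map_sum]
  refine Finset.sum_congr rfl fun i _ => ?_
  rw [homogeneousComponent_mul_of_totalDegree_le (totalDegree_X_pow_card_sub_X_le i)
    (totalDegree_pderiv_le i hg), hX, homogeneousComponent_pderiv]

theorem eval_frobeniusTangent (g : MvPolynomial ι F) (P : ι → F) :
    eval P (frobeniusTangent g) = 0 := by
  simp only [frobeniusTangent, map_sum, map_mul, map_sub, map_pow, eval_X, FiniteField.pow_card,
    sub_self, zero_mul, Finset.sum_const_zero]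

theorem eval_pderiv_frobeniusTangent (g : MvPolynomial ι F) (P : ι → F) (i : ι) :
    eval P (pderiv i (frobeniusTangent g)) = -eval P (pderiv i g) := by
  classical
  have hX (j : ι) : eval P (pderiv i (X j ^ Fintype.card F - X j)) = if j = i then -1 else 0 := by
    rw [map_sub, pderiv_pow, ← map_natCast C, FiniteField.cast_card_eq_zero, pderiv_X,
      Pi.single_apply]
    split_ifs <;> simp_all
  simp only [frobeniusTangent, map_sum, map_add, pderiv_mul, map_mul, hX]
  simp [FiniteField.pow_card]

theorem homogeneousComponent_dvd_of_dvd_frobeniusTangent (hg : g.totalDegree ≤ d + 1)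
    (htop : homogeneousComponent (d + 1) g ≠ 0) (hdvd : g ∣ frobeniusTangent g) :
    homogeneousComponent (d + 1) g ∣
      ∑ i, X i ^ Fintype.card F * pderiv i (homogeneousComponent (d + 1) g) := by
  obtain ⟨k, hk⟩ := hdvd
  have hdeg : g.totalDegree = d + 1 := le_antisymm hg <| by
    by_contra! h
    exact htop (homogeneousComponent_eq_zero _ _ h)
  have hg0 : g ≠ 0 := by
    rintro rfl
    exact htop (map_zero _)
  have hQ : 0 < Fintype.card F := Fintype.card_pos
  have hkdeg : k.totalDegree ≤ Fintype.card F - 1 := by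
    rcases eq_or_ne k 0 with rfl | hk0
    · simp
    · have := totalDegree_mul_of_isDomain hg0 hk0
      have := totalDegree_frobeniusTangent_le hg
      lia
  refine ⟨homogeneousComponent (Fintype.card F - 1) k, ?_⟩
  rw [← homogeneousComponent_frobeniusTangent hg,
    ← homogeneousComponent_mul_of_totalDegree_le hg hkdeg, hk]
  congr 2
  lia

/-- By Euler's identity the divisibility restricts to `T(s, 1) ∣ (s^Q - s) T'(s, 1)`. -/
theorem derivative_lineRestrict_eq_zero_of_dvd {T : MvPolynomial (Fin 2) F}
    (hT : T.IsHomogeneous d) (hne : ∀ v ≠ 0, eval v T ≠ 0)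
    (hdvd : T ∣ ∑ i, X i ^ Fintype.card F * pderiv i T) :
    (lineRestrict ![0, 1] ![1, 0] T).derivative = 0 := by
  set v : Fin 2 → F := ![0, 1]
  set w : Fin 2 → F := ![1, 0]
  have hX₀ : lineRestrict v w (X 0) = Polynomial.X := by simp [lineRestrict_X, v, w]
  have hX₁ : lineRestrict v w (X 1) = 1 := by simp [lineRestrict_X, v, w]
  have hderiv : (lineRestrict v w T).derivative = lineRestrict v w (pderiv 0 T) := by
    rw [derivative_lineRestrict, Fin.sum_univ_two]
    simp [v, w]
  have heuler : Polynomial.X * lineRestrict v w (pderiv 0 T) + lineRestrict v w (pderiv 1 T) =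
      d • lineRestrict v w T := by
    rw [← map_nsmul, ← hT.sum_X_mul_pderiv, Fin.sum_univ_two, map_add, map_mul, map_mul, hX₀, hX₁,
      one_mul]
  have hdvdL := map_dvd (lineRestrict v w) hdvd
  rw [Fin.sum_univ_two] at hdvdL
  simp only [map_add, map_mul, map_pow, hX₀, hX₁, one_pow, one_mul] at hdvdL
  refine derivative_eq_zero_of_dvd_of_forall_eval_ne_zero (fun c => ?_) ?_
  · rw [eval_lineRestrict]
    exact hne _ fun h => one_ne_zero (α := F) (by simpa [v, w] using congrFun h 1)
  · have hsplit : Polynomial.X ^ Fintype.card F * lineRestrict v w (pderiv 0 T) +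
          lineRestrict v w (pderiv 1 T) =
        (Polynomial.X ^ Fintype.card F - Polynomial.X) * (lineRestrict v w T).derivative +
          d • lineRestrict v w T := by
      rw [hderiv, ← heuler]
      ring
    rw [hsplit] at hdvdL
    exact (dvd_add_left (dvd_nsmul_of_dvd d dvd_rfl)).1 hdvdL

theorem not_dvd_frobeniusTangent {g : MvPolynomial (Fin 2) F} (hg : g.totalDegree ≤ d)
    (hdF : (d : F) ≠ 0) (hdQ : d + 1 < Fintype.card F)
    (htop : ∀ v ≠ 0, eval v (homogeneousComponent d g) ≠ 0) : ¬ g ∣ frobeniusTangent g := by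
  obtain ⟨e, rfl⟩ : ∃ e, d = e + 1 := Nat.exists_eq_succ_of_ne_zero (by rintro rfl; simp at hdF)
  intro hdvd
  set T := homogeneousComponent (e + 1) g
  have hT : T.IsHomogeneous (e + 1) := homogeneousComponent_isHomogeneous _ _
  have hdvdT := homogeneousComponent_dvd_of_dvd_frobeniusTangent hg
    (fun h : T = 0 => htop 1 one_ne_zero (by rw [← map_zero (eval 1), ← h])) hdvd
  have hcoeff : (lineRestrict ![0, 1] ![1, 0] T).coeff (e + 1) ≠ 0 := by
    rw [coeff_lineRestrict_comm hT hdQ _ _ le_rfl, Nat.sub_self, coeff_zero_lineRestrict]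
    exact htop _ fun h => one_ne_zero (α := F) (congrFun h 0)
  have hzero :=
    congrArg (Polynomial.coeff · e) (derivative_lineRestrict_eq_zero_of_dvd hT htop hdvdT)
  simp only [Polynomial.coeff_derivative, Polynomial.coeff_zero] at hzero
  exact mul_ne_zero hcoeff (by exact_mod_cast hdF) hzero

end FrobeniusTangent

section Bezout

theorem finrank_restrictTotalDegree_fin_two_mul_two (F : Type*) [Field F] (m : ℕ) :
    finrank F (restrictTotalDegree (Fin 2) F m) * 2 = (m + 1) * (m + 2) := by
  let s : Finset (ℕ × ℕ) := (Finset.range (m + 1)).biUnion Finset.HasAntidiagonal.antidiagonal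
  let e : {n : Fin 2 →₀ ℕ | (n.sum fun _ e => e) ≤ m} ≃ s :=
    (Finsupp.equivFunOnFinite.trans (finTwoArrowEquiv ℕ)).subtypeEquiv fun n => by
      simp [s, Finsupp.sum_fintype, Fin.sum_univ_two, Order.lt_add_one_iff]
  have hcard : s.card = ∑ k ∈ Finset.range (m + 1), (k + 1) := by
    rw [Finset.card_biUnion fun a _ b _ hab => Finset.disjoint_left.2 fun p ha hb => hab <| by
      rw [← Finset.HasAntidiagonal.mem_antidiagonal.1 ha,
        ← Finset.HasAntidiagonal.mem_antidiagonal.1 hb]]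
    simp only [Finset.Nat.card_antidiagonal]
  let b : Basis s F (restrictTotalDegree (Fin 2) F m) := (basisRestrictSupport F _).reindex e
  rw [finrank_eq_card_basis b, Fintype.card_coe, hcard, ← add_zero (∑ k ∈ _, _),
    ← Finset.sum_range_succ' (fun k => k), Finset.sum_range_id_mul_two, mul_comm]
  rfl

variable {F M : Type*} [Field F] [AddCommGroup M] [Module F M]

theorem finrank_map_mulLeft_restrictTotalDegree {σ : Type*} {g : MvPolynomial σ F} (hg : g ≠ 0)
    (m : ℕ) :
    finrank F ((restrictTotalDegree σ F m).map (LinearMap.mulLeft F g)) =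
      finrank F (restrictTotalDegree σ F m) :=
  (Submodule.equivMapOfInjective _ (mul_right_injective₀ hg) _).finrank_eq.symm

theorem map_mulLeft_restrictTotalDegree_le {σ : Type*} (g : MvPolynomial σ F) (m : ℕ) :
    (restrictTotalDegree σ F m).map (LinearMap.mulLeft F g) ≤
      restrictTotalDegree σ F (g.totalDegree + m) := by
  rintro _ ⟨p, hp, rfl⟩
  rw [SetLike.mem_coe, mem_restrictTotalDegree] at hp
  rw [LinearMap.mulLeft_apply, mem_restrictTotalDegree]
  exact (totalDegree_mul g p).trans (by gcongr)

theorem exists_map_restrictTotalDegree_eq_top [Module.Finite F M] {σ : Type*}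
    {E : MvPolynomial σ F →ₗ[F] M} (hE : Function.Surjective E) :
    ∃ m₀, ∀ m ≥ m₀, (restrictTotalDegree σ F m).map E = ⊤ := by
  obtain ⟨k, b, hb⟩ := Module.Finite.exists_fin (R := F) (M := M)
  choose p hp using fun i => hE (b i)
  refine ⟨Finset.univ.sup fun i => (p i).totalDegree, fun m hm => top_le_iff.1 ?_⟩
  rw [← hb, Submodule.span_le]
  rintro _ ⟨i, rfl⟩
  refine ⟨p i, ?_, hp i⟩
  rw [SetLike.mem_coe, mem_restrictTotalDegree]
  exact (Finset.le_sup (f := fun i => (p i).totalDegree) (Finset.mem_univ i)).trans hm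

theorem map_mulLeft_inf_map_mulLeft_le {σ : Type*} {g h : MvPolynomial σ F} (hg : Irreducible g)
    (hh : ¬ g ∣ h) (m : ℕ) :
    (restrictTotalDegree σ F (h.totalDegree + m)).map (LinearMap.mulLeft F g) ⊓
        (restrictTotalDegree σ F (g.totalDegree + m)).map (LinearMap.mulLeft F h) ≤
      (restrictTotalDegree σ F m).map (LinearMap.mulLeft F (g * h)) := by
  rintro _ ⟨⟨a, -, rfl⟩, ⟨b, hb, hab⟩⟩
  rw [SetLike.mem_coe, mem_restrictTotalDegree] at hb
  simp only [LinearMap.mulLeft_apply] at hab ⊢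
  obtain ⟨c, rfl⟩ := (hg.prime.dvd_or_dvd (hab ▸ dvd_mul_right g a : g ∣ h * b)).resolve_left hh
  refine ⟨c, ?_, ?_⟩
  · rw [SetLike.mem_coe, mem_restrictTotalDegree]
    rcases eq_or_ne c 0 with rfl | hc
    · simp
    · rw [totalDegree_mul_of_isDomain hg.ne_zero hc] at hb
      lia
  · rw [LinearMap.mulLeft_apply, ← hab]
    ring

/-- Bézout's bound, by comparing dimensions of the spaces of polynomials of large degree `m`. -/
theorem finrank_le_totalDegree_mul_totalDegree [Module.Finite F M] {g h : MvPolynomial (Fin 2) F}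
    (hg : Irreducible g) (hh : ¬ g ∣ h) {E : MvPolynomial (Fin 2) F →ₗ[F] M}
    (hE : Function.Surjective E)
    (hEg : ∀ p, E (g * p) = 0) (hEh : ∀ p, E (h * p) = 0) :
    finrank F M ≤ g.totalDegree * h.totalDegree := by
  have hh0 : h ≠ 0 := by
    rintro rfl
    exact hh (dvd_zero g)
  obtain ⟨m, hm⟩ := exists_map_restrictTotalDegree_eq_top hE
  set d := g.totalDegree
  set e := h.totalDegree
  set V := restrictTotalDegree (Fin 2) F
  have htop : (V (d + (e + m))).map E = ⊤ := hm _ (by lia)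
  set A := (V (e + m)).map (LinearMap.mulLeft F g)
  set B := (V (d + m)).map (LinearMap.mulLeft F h)
  have hle : A ⊔ B ≤ V (d + (e + m)) :=
    sup_le (map_mulLeft_restrictTotalDegree_le g _)
      ((map_mulLeft_restrictTotalDegree_le h _).trans_eq (by rw [add_left_comm]))
  have hker : A ⊔ B ≤ LinearMap.ker E := by
    refine sup_le ?_ ?_ <;> rintro _ ⟨p, -, rfl⟩
    exacts [hEg p, hEh p]
  have hrank : finrank F M + finrank F ↥(A ⊔ B) ≤ finrank F (V (d + (e + m))) := by
    rw [← LinearMap.finrank_range_add_finrank_ker (E.domRestrict (V (d + (e + m)))),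
      LinearMap.range_domRestrict, htop, finrank_top, LinearMap.ker_domRestrict]
    gcongr
    rw [← Submodule.finrank_map_subtype_eq, Submodule.map_comap_subtype]
    exact Submodule.finrank_mono (le_inf hle hker)
  have hinf : finrank F ↥(A ⊓ B) ≤ finrank F (V m) := by
    rw [← finrank_map_mulLeft_restrictTotalDegree (mul_ne_zero hg.ne_zero hh0) m]
    exact Submodule.finrank_mono (map_mulLeft_inf_map_mulLeft_le hg hh m)
  have hsup := Submodule.finrank_sup_add_finrank_inf_eq A B
  rw [finrank_map_mulLeft_restrictTotalDegree hg.ne_zero,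
    finrank_map_mulLeft_restrictTotalDegree hh0] at hsup
  have hV (k : ℕ) : finrank F (V k) * 2 = (k + 1) * (k + 2) :=
    finrank_restrictTotalDegree_fin_two_mul_two F k
  nlinarith [hV m, hV (d + m), hV (e + m), hV (d + (e + m))]

end Bezout

section TangentVectors

variable {F ι : Type*} [Field F]

/-- The value of a polynomial at the point `P`, together with its derivative there in the
direction `v`. -/
noncomputable def tangentJet (P v : ι → F) : MvPolynomial ι F →ₗ[F] F × F :=
  ((Polynomial.lcoeff F 0).prod (Polynomial.lcoeff F 1)) ∘ₗ (lineRestrict P v).toLinearMap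

/-- The ideal of polynomials whose value at the point `P` and derivative there in the direction `v`
both vanish. -/
noncomputable def tangentIdeal (P v : ι → F) : Ideal (MvPolynomial ι F) :=
  (Ideal.span {Polynomial.X ^ 2}).comap (lineRestrict P v)

theorem mem_tangentIdeal {P v : ι → F} {p : MvPolynomial ι F} :
    p ∈ tangentIdeal P v ↔ tangentJet P v p = 0 := by
  rw [tangentIdeal, Ideal.mem_comap, Ideal.mem_span_singleton, Polynomial.X_pow_dvd_iff]
  exact ⟨fun h => Prod.ext (h 0 two_pos) (h 1 one_lt_two), fun h k hk => by
    interval_cases k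
    exacts [congrArg Prod.fst h, congrArg Prod.snd h]⟩

theorem tangentJet_apply [Fintype ι] (P v : ι → F) (p : MvPolynomial ι F) :
    tangentJet P v p = (eval P p, ∑ i, v i * eval P (pderiv i p)) := by
  rw [← coeff_zero_lineRestrict p P v, ← coeff_one_lineRestrict]
  rfl

theorem tangentJet_surjective [Finite ι] (P : ι → F) {v : ι → F} (hv : v ≠ 0) :
    Function.Surjective (tangentJet P v) := by
  classical
  cases nonempty_fintype ι
  obtain ⟨k, hk⟩ := Function.ne_iff.1 hv
  rintro ⟨a, b⟩
  refine ⟨C a + C (b * (v k)⁻¹) * (X k - C (P k)), ?_⟩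
  rw [tangentJet_apply]
  have hk : v k ≠ 0 := hk
  simp [pderiv_X, Pi.single_apply, apply_ite (eval P), mul_left_comm (v k), mul_inv_cancel₀ hk]

theorem sq_mem_tangentIdeal {P : ι → F} (v : ι → F) {p : MvPolynomial ι F} (hp : eval P p = 0) :
    p ^ 2 ∈ tangentIdeal P v := by
  rw [tangentIdeal, Ideal.mem_comap, Ideal.mem_span_singleton, map_pow]
  refine pow_dvd_pow_of_dvd (Polynomial.X_dvd_iff.2 ?_) 2
  rw [coeff_zero_lineRestrict, hp]

theorem isCoprime_tangentIdeal {P P' : ι → F} (hP : P ≠ P') (v v' : ι → F) :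
    IsCoprime (tangentIdeal P v) (tangentIdeal P' v') := by
  obtain ⟨i, hi⟩ := Function.ne_iff.1 hP
  have hcop : IsCoprime (X i - C (P i) : MvPolynomial ι F) (X i - C (P' i)) := by
    refine ⟨-C (P i - P' i)⁻¹, C (P i - P' i)⁻¹, ?_⟩
    calc
      _ = C ((P i - P' i)⁻¹ * (P i - P' i)) := by
        simp only [map_mul, map_sub]
        ring
      _ = 1 := by rw [inv_mul_cancel₀ (sub_ne_zero.2 hi), C_1]
  obtain ⟨a, b, hab⟩ := hcop.pow (m := 2) (n := 2)
  exact Ideal.isCoprime_iff_exists.2 ⟨_, Ideal.mul_mem_left _ a (sq_mem_tangentIdeal v (by simp)),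
    _, Ideal.mul_mem_left _ b (sq_mem_tangentIdeal v' (by simp)), hab⟩

theorem pi_tangentJet_surjective [Finite ι] {κ : Type*} [Finite κ] {P v : κ → ι → F}
    (hP : Function.Injective P) (hv : ∀ k, v k ≠ 0) :
    Function.Surjective (LinearMap.pi fun k => tangentJet (P k) (v k)) := by
  intro y
  choose p hp using fun k => tangentJet_surjective (P k) (hv k) (y k)
  obtain ⟨r, hr⟩ := Ideal.exists_forall_sub_mem_ideal
    (fun j k hjk => isCoprime_tangentIdeal (hP.ne hjk) (v j) (v k)) p
  refine ⟨r, funext fun k => ?_⟩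
  rw [LinearMap.pi_apply, ← hp k, ← sub_eq_zero, ← map_sub]
  exact mem_tangentIdeal.1 (hr k)

theorem exists_ne_zero_sum_mul_eq_zero (a : Fin 2 → F) :
    ∃ v : Fin 2 → F, v ≠ 0 ∧ ∑ i, v i * a i = 0 := by
  rcases eq_or_ne a 0 with rfl | ha
  · exact ⟨1, one_ne_zero, by simp⟩
  · refine ⟨![a 1, -a 0], fun h => ha ?_, by rw [Fin.sum_univ_two]; simp [mul_comm]⟩
    ext i
    fin_cases i
    exacts [by simpa using congrFun h 1, congrFun h 0]

end TangentVectors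

section StohrVoloch

open scoped Classical Finset

variable {F : Type*} [Field F] [Fintype F] {d : ℕ}

/-- The Stöhr–Voloch argument: at every rational zero the curve `g = 0` meets
`frobeniusTangent g = 0` with multiplicity at least two, so Bézout's bound counts it twice. -/
theorem two_mul_card_zeros_le_of_irreducible {g : MvPolynomial (Fin 2) F} (hg : Irreducible g)
    (hdeg : g.totalDegree ≤ d + 1) (hndvd : ¬ g ∣ frobeniusTangent g) :
    2 * #{x : Fin 2 → F | eval x g = 0} ≤ (d + 1) * (Fintype.card F + d) := by
  set Z : Finset (Fin 2 → F) := {x | eval x g = 0}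
  have hZ (P : Z) : eval P.1 g = 0 := (Finset.mem_filter.1 P.2).2
  choose v hv0 hv using fun P : Z => exists_ne_zero_sum_mul_eq_zero fun i => eval P.1 (pderiv i g)
  have hg_mem (P : Z) : g ∈ tangentIdeal P.1 (v P) := by
    rw [mem_tangentIdeal, tangentJet_apply, hZ P, hv P]
    rfl
  have hh_mem (P : Z) : frobeniusTangent g ∈ tangentIdeal P.1 (v P) := by
    rw [mem_tangentIdeal, tangentJet_apply]
    simp only [eval_frobeniusTangent, eval_pderiv_frobeniusTangent, mul_neg,
      Finset.sum_neg_distrib, hv P, neg_zero]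
    rfl
  have hbezout := finrank_le_totalDegree_mul_totalDegree hg hndvd
    (pi_tangentJet_surjective (P := fun P : Z => P.1) Subtype.val_injective hv0)
    (fun p => funext fun P => mem_tangentIdeal.1 (Ideal.mul_mem_right p _ (hg_mem P)))
    (fun p => funext fun P => mem_tangentIdeal.1 (Ideal.mul_mem_right p _ (hh_mem P)))
  calc
    2 * #Z = finrank F (Z → F × F) := by
      simp [finrank_pi_fintype, finrank_prod, mul_comm]
    _ ≤ _ := hbezout
    _ ≤ _ := Nat.mul_le_mul hdeg (totalDegree_frobeniusTangent_le hdeg)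

end StohrVoloch

section AffineSubst

variable {R ι κ : Type*} [CommRing R] [Fintype κ]

/-- The polynomial obtained from `f` by substituting the affine parametrization
`x ↦ v + ∑ₖ xₖ A k`. -/
noncomputable def affineSubst (v : ι → R) (A : κ → ι → R) :
    MvPolynomial ι R →ₐ[R] MvPolynomial κ R :=
  aeval fun i => C (v i) + ∑ k, C (A k i) * X k

theorem lineRestrict_zero_affineSubst (v : ι → R) (A : κ → ι → R) (w : κ → R)
    (f : MvPolynomial ι R) :
    lineRestrict 0 w (affineSubst v A f) = lineRestrict v (∑ k, w k • A k) f := by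
  refine DFunLike.congr_fun
    (algHom_ext (f := (lineRestrict 0 w).comp (affineSubst v A)) fun i => ?_) f
  rw [AlgHom.comp_apply, affineSubst, aeval_X, lineRestrict_X]
  simp only [map_add, map_sum, map_mul, lineRestrict_C, lineRestrict_X, Pi.zero_apply, map_zero,
    zero_add, Finset.sum_apply, Pi.smul_apply, smul_eq_mul, Finset.sum_mul]
  congr 1
  exact Finset.sum_congr rfl fun k _ => by ring

theorem eval_affineSubst (v : ι → R) (A : κ → ι → R) (x : κ → R) (f : MvPolynomial ι R) :
    eval x (affineSubst v A f) = eval (v + ∑ k, x k • A k) f := by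
  have := eval_lineRestrict (affineSubst v A f) 0 x 1
  rwa [lineRestrict_zero_affineSubst, eval_lineRestrict, one_smul, one_smul, zero_add,
    eq_comm] at this

theorem totalDegree_affineSubst_le (v : ι → R) (A : κ → ι → R) (f : MvPolynomial ι R) :
    (affineSubst v A f).totalDegree ≤ f.totalDegree := by
  have hX (i : ι) : (C (v i) + ∑ k, C (A k i) * X k : MvPolynomial κ R).totalDegree ≤ 1 := by
    refine (totalDegree_add _ _).trans (max_le (by simp) (totalDegree_finsetSum_le fun k _ => ?_))
    rw [← smul_eq_C_mul]
    exact (totalDegree_smul_le _ _).trans (isHomogeneous_X R k).totalDegree_le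
  rw [affineSubst, aeval_def, eval₂_eq]
  refine totalDegree_finsetSum_le fun m hm => ?_
  calc
    _ ≤ (algebraMap R (MvPolynomial κ R) (f.coeff m)).totalDegree + ∑ i ∈ m.support, m i :=
      (totalDegree_mul _ _).trans <| add_le_add_right ((totalDegree_finsetProd _ _).trans <|
        Finset.sum_le_sum fun i _ => (totalDegree_pow _ _).trans
          ((Nat.mul_le_mul_left _ (hX i)).trans_eq (mul_one _))) _
    _ = m.sum fun _ k => k := by rw [algebraMap_eq, totalDegree_C, zero_add, Finsupp.sum]
    _ ≤ f.totalDegree := le_totalDegree hm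

theorem eval_homogeneousComponent_affineSubst {f : MvPolynomial ι R} {d : ℕ}
    (hf : f.totalDegree ≤ d) (v : ι → R) (A : κ → ι → R) (w : κ → R) :
    eval w (homogeneousComponent d (affineSubst v A f)) =
      eval (∑ k, w k • A k) (homogeneousComponent d f) := by
  rw [← coeff_lineRestrict_eq_eval_homogeneousComponent
    ((totalDegree_affineSubst_le v A f).trans hf) 0, lineRestrict_zero_affineSubst,
    coeff_lineRestrict_eq_eval_homogeneousComponent hf]

end AffineSubst

section PlaneCurves

open scoped Classical Finset

variable {F : Type*} [Field F]

theorem hasLineDegree_eval {ι : Type*} {f : MvPolynomial ι F} {d : ℕ} (hf : f.totalDegree ≤ d) :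
    HasLineDegree d (fun x => eval x f) (fun w => eval w (homogeneousComponent d f)) :=
  fun u w => ⟨lineRestrict u w f, (natDegree_lineRestrict_le f u w).trans hf,
    coeff_lineRestrict_eq_eval_homogeneousComponent hf u w, eval_lineRestrict f u w⟩

theorem totalDegree_pos_of_not_isUnit {ι : Type*} {g : MvPolynomial ι F} (h0 : g ≠ 0)
    (hg : ¬ IsUnit g) : 0 < g.totalDegree := by
  by_contra! hdeg
  rw [totalDegree_eq_zero_iff_eq_C.1 (Nat.le_zero.1 hdeg)] at h0 hg
  exact hg ((IsUnit.mk0 _ fun h => h0 (by rw [h, C_0])).map C)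

theorem exists_eq_mul_of_not_irreducible {ι : Type*} {g : MvPolynomial ι F}
    (hdeg : g.totalDegree ≠ 0) (hirr : ¬ Irreducible g) :
    ∃ g₁ g₂ d₁ d₂, g = g₁ * g₂ ∧ g₁.totalDegree = d₁ + 1 ∧ g₂.totalDegree = d₂ + 1 ∧
      g.totalDegree = d₁ + 1 + (d₂ + 1) := by
  have hunit : ¬ IsUnit g := fun h => by
    obtain ⟨r, -, rfl⟩ := isUnit_iff_eq_C_of_isReduced.1 h
    exact hdeg (totalDegree_C r)
  obtain ⟨g₁, g₂, rfl, h₁, h₂⟩ : ∃ g₁ g₂, g = g₁ * g₂ ∧ ¬ IsUnit g₁ ∧ ¬ IsUnit g₂ := by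
    by_contra! h
    exact hirr ⟨hunit, fun a b hab => or_iff_not_imp_left.2 (h a b hab)⟩
  obtain ⟨hg₁, hg₂⟩ := mul_ne_zero_iff.1 fun h : g₁ * g₂ = 0 => hdeg (by rw [h, totalDegree_zero])
  obtain ⟨d₁, hd₁⟩ := Nat.exists_eq_succ_of_ne_zero (totalDegree_pos_of_not_isUnit hg₁ h₁).ne'
  obtain ⟨d₂, hd₂⟩ := Nat.exists_eq_succ_of_ne_zero (totalDegree_pos_of_not_isUnit hg₂ h₂).ne'
  exact ⟨g₁, g₂, d₁, d₂, rfl, hd₁, hd₂, by rw [totalDegree_mul_of_isDomain hg₁ hg₂, hd₁, hd₂]⟩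

variable [Fintype F]

theorem card_zeros_le_of_forall_homogeneousComponent_ne_zero {g : MvPolynomial (Fin 2) F} {d : ℕ}
    (hg : g.totalDegree ≤ d + 1) (hdQ : d + 1 < Fintype.card F)
    (htop : ∀ w ≠ 0, eval w (homogeneousComponent (d + 1) g) ≠ 0) :
    #{x : Fin 2 → F | eval x g = 0} ≤ 1 + (Fintype.card F + 1) * d := by
  by_cases! hzero : ∃ u : Fin 2 → F, eval u g = 0
  · obtain ⟨u, hu⟩ := hzero
    have hline (w : Fin 2 → F) (hw : w ≠ 0) : ∃ s : F, eval (u + s • w) g ≠ 0 := by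
      by_contra! hvanish
      refine htop w hw ?_
      rw [← coeff_lineRestrict_eq_eval_homogeneousComponent hg u,
        Polynomial.eq_zero_of_natDegree_lt_card_of_eval_eq_zero (lineRestrict u w g)
          Function.injective_id (fun s => (eval_lineRestrict g u w s).trans (hvanish s))
          (((natDegree_lineRestrict_le g u w).trans hg).trans_lt hdQ), Polynomial.coeff_zero]
    have hcount := (hasLineDegree_eval hg).card_le_of_forall_exists_ne_zero hu hline
    obtain ⟨Q, hQ⟩ : ∃ Q, Fintype.card F = Q + 2 := Nat.exists_eq_add_of_le' Fintype.one_lt_card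
    rw [Fintype.card_fun, Fintype.card_fin, hQ] at hcount
    rw [hQ]
    refine Nat.le_of_mul_le_mul_left (hcount.trans_eq ?_) (by lia : 0 < Q + 2 - 1)
    have : (Q + 2) ^ 2 - 1 = (Q + 1) * (Q + 3) := Nat.sub_eq_of_eq_add (by ring)
    rw [this, Nat.add_sub_cancel, show Q + 2 - 1 = Q + 1 from rfl]
    ring
  · rw [Finset.filter_false_of_mem fun x _ => hzero x, Finset.card_empty]
    exact Nat.zero_le _

theorem card_zeros_lt_of_not_irreducible {q : ℕ} (hcard : Fintype.card F = q ^ 2) (hq : 2 < q)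
    {g : MvPolynomial (Fin 2) F} (hg : g.totalDegree ≤ q + 1)
    (htop : ∀ w ≠ 0, eval w (homogeneousComponent (q + 1) g) ≠ 0) (hirr : ¬ Irreducible g) :
    #{x : Fin 2 → F | eval x g = 0} < q ^ 3 := by
  have htop0 : homogeneousComponent (q + 1) g ≠ 0 := fun h =>
    htop 1 one_ne_zero (by rw [h, map_zero])
  have hdeg : g.totalDegree = q + 1 := hg.antisymm <| by
    by_contra! h
    exact htop0 (homogeneousComponent_eq_zero _ _ h)
  obtain ⟨g₁, g₂, d₁, d₂, rfl, hd₁, hd₂, hsum⟩ :=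
    exists_eq_mul_of_not_irreducible (by rw [hdeg]; exact q.succ_ne_zero) hirr
  rw [hdeg] at hsum
  rw [hsum, homogeneousComponent_mul_of_totalDegree_le hd₁.le hd₂.le] at htop
  simp only [map_mul, mul_ne_zero_iff] at htop
  have hQ : q + 1 < Fintype.card F := by rw [hcard]; nlinarith
  have hN₁ := card_zeros_le_of_forall_homogeneousComponent_ne_zero hd₁.le (by lia)
    fun w hw => (htop w hw).1
  have hN₂ := card_zeros_le_of_forall_homogeneousComponent_ne_zero hd₂.le (by lia)
    fun w hw => (htop w hw).2
  calc
    _ = #(({x : Fin 2 → F | eval x g₁ = 0} : Finset _) ∪ ({x | eval x g₂ = 0} : Finset _)) := by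
      simp only [← Finset.filter_or, map_mul, mul_eq_zero]
    _ ≤ (1 + (Fintype.card F + 1) * d₁) + (1 + (Fintype.card F + 1) * d₂) :=
      (Finset.card_union_le _ _).trans (add_le_add hN₁ hN₂)
    _ = 2 + (q ^ 2 + 1) * (d₁ + d₂) := by rw [hcard]; ring
    _ < q ^ 3 := by
      rw [show q = d₁ + d₂ + 1 by lia] at hq ⊢
      nlinarith

theorem card_zeros_lt_of_forall_homogeneousComponent_ne_zero {q : ℕ}
    (hcard : Fintype.card F = q ^ 2) (hq : 2 < q) {g : MvPolynomial (Fin 2) F}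
    (hg : g.totalDegree ≤ q + 1)
    (htop : ∀ w ≠ 0, eval w (homogeneousComponent (q + 1) g) ≠ 0) :
    #{x : Fin 2 → F | eval x g = 0} < q ^ 3 := by
  by_cases hirr : Irreducible g
  · have hqF : ((q + 1 : ℕ) : F) ≠ 0 := by
      have hq0 : (q : F) = 0 := by
        rw [← pow_eq_zero_iff two_ne_zero, ← Nat.cast_pow, ← hcard, FiniteField.cast_card_eq_zero]
      rw [Nat.cast_succ, hq0, zero_add]
      exact one_ne_zero
    have h := two_mul_card_zeros_le_of_irreducible hirr hg
      (not_dvd_frobeniusTangent hg hqF (by rw [hcard]; nlinarith) htop)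
    rw [hcard] at h
    nlinarith
  · exact card_zeros_lt_of_not_irreducible hcard hq hg htop hirr

theorem card_affine_plane_zeros_lt {q : ℕ} (hcard : Fintype.card F = q ^ 2) (hq : 2 < q)
    {ι : Type*} {f : MvPolynomial ι F} (hf : f.IsHomogeneous (q + 1)) {A : Fin 2 → ι → F}
    (hA : ∀ x : Fin 2 → F, x ≠ 0 → eval (∑ k, x k • A k) f ≠ 0) (v : ι → F) :
    #{x : Fin 2 → F | eval (v + ∑ k, x k • A k) f = 0} < q ^ 3 := by
  simp only [← eval_affineSubst]
  refine card_zeros_lt_of_forall_homogeneousComponent_ne_zero hcard hq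
    ((totalDegree_affineSubst_le v A f).trans hf.totalDegree_le) fun w hw => ?_
  rw [eval_homogeneousComponent_affineSubst hf.totalDegree_le, homogeneousComponent_eq_self hf]
  exact hA w hw

end PlaneCurves

section Frobenius

open scoped Classical

variable {F : Type*} [Field F] [Fintype F]

theorem sum_units_eval_mul_inv_pow {P : Polynomial F} (hP : P.natDegree < Fintype.card F - 1)
    {i : ℕ} (hi : i < Fintype.card F - 1) :
    ∑ s : Fˣ, P.eval (s : F) * ((s : F) ^ i)⁻¹ = -P.coeff i := by
  set N := Fintype.card F - 1
  have hinv (s : Fˣ) : ((s : F) ^ i)⁻¹ = (s : F) ^ (N - i) := by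
    refine (eq_inv_of_mul_eq_one_left ?_).symm
    rw [← pow_add, Nat.sub_add_cancel hi.le]
    exact FiniteField.pow_card_sub_one_eq_one _ s.ne_zero
  have hdvd (j : ℕ) (hj : j < N) : N ∣ j + (N - i) ↔ j = i := by
    refine ⟨fun ⟨k, hk⟩ => ?_, fun h => ⟨1, by lia⟩⟩
    obtain _ | _ | k := k
    · lia
    · lia
    · have := Nat.mul_le_mul_left N (Nat.le_add_left 2 k)
      lia
  calc
    _ = ∑ j ∈ Finset.range N, P.coeff j * ∑ s : Fˣ, (s : F) ^ (j + (N - i)) := by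
      simp only [hinv, Polynomial.eval_eq_sum_range' hP, Finset.sum_mul, Finset.mul_sum]
      rw [Finset.sum_comm]
      simp only [pow_add, mul_assoc]
    _ = ∑ j ∈ Finset.range N, P.coeff j * if j = i then -1 else 0 :=
      Finset.sum_congr rfl fun j hj => by
        rw [FiniteField.sum_pow_units]
        simp only [N, hdvd j (Finset.mem_range.1 hj)]
    _ = _ := by simp [hi]

theorem exists_ringHom_eq_pow {q : ℕ} (hcard : Fintype.card F = q ^ 2) :
    ∃ σ : F →+* F, ∀ x, σ x = x ^ q := by
  obtain ⟨p, _⟩ := CharP.exists F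
  obtain ⟨n, hp, hn⟩ := FiniteField.card F p
  obtain ⟨k, -, rfl⟩ := (Nat.dvd_prime_pow hp).1 (hn ▸ hcard ▸ Dvd.intro_left q (pow_two q).symm)
  have : Fact p.Prime := ⟨hp⟩
  exact ⟨iterateFrobenius F p k, iterateFrobenius_def p k⟩

variable {q : ℕ} {σ : F →+* F}

theorem frobenius_frobenius (hcard : Fintype.card F = q ^ 2) (hσ : ∀ x, σ x = x ^ q) (x : F) :
    σ (σ x) = x := by
  rw [hσ, hσ, ← pow_mul, ← pow_two, ← hcard, FiniteField.pow_card]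

theorem frobenius_coeff {P : Polynomial F} (hP : P.natDegree < Fintype.card F - 1)
    (hfix : ∀ s ≠ 0, σ (P.eval s) = P.eval s) {i j : ℕ} (hi : i < Fintype.card F - 1)
    (hj : j < Fintype.card F - 1) (hij : ∀ s : F, σ (s ^ i) = s ^ j) :
    σ (P.coeff i) = P.coeff j := by
  rw [← neg_inj, ← map_neg, ← sum_units_eval_mul_inv_pow hP hi, ← sum_units_eval_mul_inv_pow hP hj,
    map_sum]
  exact Finset.sum_congr rfl fun s _ => by rw [map_mul, hfix s s.ne_zero, map_inv₀, hij]

theorem exists_frobenius_ne (hcard : Fintype.card F = q ^ 2) (hq : 1 < q) (hσ : ∀ x, σ x = x ^ q) :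
    ∃ a, σ a ≠ a := by
  by_contra! hfix
  have hX : (Polynomial.X ^ q : Polynomial F) = Polynomial.X := by
    have hqcard : q < Fintype.card F := by rw [hcard]; nlinarith
    refine Polynomial.eq_of_natDegree_lt_card_of_eval_eq _ _ Function.injective_id (fun s => ?_) ?_
    · rw [Polynomial.eval_pow, Polynomial.eval_X, id, ← hσ, hfix]
    · rw [Polynomial.natDegree_X_pow, Polynomial.natDegree_X]
      exact max_lt hqcard (hq.trans hqcard)
  have := congrArg Polynomial.natDegree hX
  rw [Polynomial.natDegree_X_pow, Polynomial.natDegree_X] at this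
  exact hq.ne' this

theorem exists_forall_frobenius_mul_eq (hcard : Fintype.card F = q ^ 2) (hq : 1 < q)
    (hσ : ∀ x, σ x = x ^ q) {c w : F} (hw : w ≠ 0) (hcw : σ w + c * w = 0) :
    ∃ e ≠ 0, ∀ t, σ (e * (σ t + c * t)) = e * (σ t + c * t) := by
  obtain ⟨a, ha⟩ := exists_frobenius_ne hcard hq hσ
  have hσw : σ w ≠ 0 := (map_ne_zero σ).2 hw
  refine ⟨(σ a - a) / σ w, div_ne_zero (sub_ne_zero.2 ha) hσw, fun t => ?_⟩
  have hc : c = -σ w / w := by field_simp; linear_combination hcw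
  simp only [hc, map_mul, map_add, map_sub, map_div₀, map_neg, frobenius_frobenius hcard hσ]
  field_simp
  ring

theorem frobenius_coeff_lineRestrict {ι : Type*} (hcard : Fintype.card F = q ^ 2) (hq : 2 < q)
    {f : MvPolynomial ι F} (hf : f.totalDegree ≤ q + 1) {e : F} {v w : ι → F}
    (hfix : ∀ s : F, s ≠ 0 → σ (e * eval (v + s • w) f) = e * eval (v + s • w) f) {i j : ℕ}
    (hi : i ≤ q) (hj : j ≤ q) (hij : ∀ s : F, σ (s ^ i) = s ^ j) :
    σ (e * (lineRestrict v w f).coeff i) = e * (lineRestrict v w f).coeff j := by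
  have hQ : q + 1 < Fintype.card F - 1 := Nat.lt_sub_of_add_lt (by rw [hcard]; nlinarith)
  rw [← Polynomial.coeff_C_mul, ← Polynomial.coeff_C_mul]
  refine frobenius_coeff ?_ (fun s hs => ?_) (by lia) (by lia) hij
  · exact (Polynomial.natDegree_C_mul_le _ _).trans_lt
      (((natDegree_lineRestrict_le f v w).trans hf).trans_lt hQ)
  · rw [Polynomial.eval_mul, Polynomial.eval_C, eval_lineRestrict, hfix s hs]

theorem frobenius_mul_eval_eq_of_forall_notMem {ι : Type*} (hcard : Fintype.card F = q ^ 2)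
    (hq : 2 < q) {f : MvPolynomial ι F} (hf : f.totalDegree ≤ q + 1)
    {W : Submodule F (ι → F)} (hW : W ≠ ⊤) {e : F}
    (hfix : ∀ v ∉ W, σ (e * eval v f) = e * eval v f) (v : ι → F) :
    σ (e * eval v f) = e * eval v f := by
  by_cases hv : v ∈ W
  · obtain ⟨z, -, hz⟩ := SetLike.exists_of_lt hW.lt_top
    have hcoeff := frobenius_coeff_lineRestrict (v := v) (w := z) hcard hq hf
      (fun s hs => hfix _ fun h => hz <| by rwa [W.add_mem_iff_right hv, W.smul_mem_iff hs] at h)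
      (i := 0) (j := 0) q.zero_le q.zero_le fun s => by rw [pow_zero, map_one]
    rwa [coeff_zero_lineRestrict] at hcoeff
  · exact hfix v hv

end Frobenius

section PolarForm

variable {R : Type*} [CommRing R] {ι : Type*}

/-- The polar form `∑ᵢ vᵢ ∂ᵢ f(w)` of the polynomial `f`, read off as the coefficient of `s` in
`f (w + s v)`. -/
noncomputable def polarForm (f : MvPolynomial ι R) (v w : ι → R) : R :=
  (lineRestrict w v f).coeff 1

theorem polarForm_eq_sum [Fintype ι] (f : MvPolynomial ι R) (v w : ι → R) :
    polarForm f v w = ∑ i, v i * eval w (pderiv i f) :=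
  coeff_one_lineRestrict f w v

variable [Finite ι]

theorem polarForm_add_left (f : MvPolynomial ι R) (u v w : ι → R) :
    polarForm f (u + v) w = polarForm f u w + polarForm f v w := by
  cases nonempty_fintype ι
  simp only [polarForm_eq_sum, Pi.add_apply, add_mul, Finset.sum_add_distrib]

theorem polarForm_smul_left (f : MvPolynomial ι R) (a : R) (v w : ι → R) :
    polarForm f (a • v) w = a * polarForm f v w := by
  cases nonempty_fintype ι
  simp only [polarForm_eq_sum, Pi.smul_apply, smul_eq_mul, mul_assoc, Finset.mul_sum]

theorem polarForm_self {f : MvPolynomial ι R} {d : ℕ} (hf : f.IsHomogeneous d) (v : ι → R) :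
    polarForm f v v = d * eval v f := by
  cases nonempty_fintype ι
  rw [polarForm_eq_sum]
  simpa using congrArg (eval v) hf.sum_X_mul_pderiv

end PolarForm

section Hermitian

variable {F ι : Type} [Field F] [Fintype F] [Finite ι] {q : ℕ} {σ : F →+* F}

theorem isHermitianForm_mul_polarForm (hcard : Fintype.card F = q ^ 2) (hq : 2 < q)
    (hσ : ∀ x, σ x = x ^ q) {f : MvPolynomial ι F} (hf : f.IsHomogeneous (q + 1)) {e : F}
    (hfix : ∀ v, σ (e * eval v f) = e * eval v f) :
    IsHermitianForm q fun v w => e * polarForm f v w := by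
  have hsymm (v w : ι → F) : e * polarForm f w v = (e * polarForm f v w) ^ q := by
    have hcoeff := frobenius_coeff_lineRestrict (v := w) (w := v) hcard hq hf.totalDegree_le
      (fun s _ => hfix _) (i := 1) (j := q) (by lia) le_rfl fun s => by rw [pow_one, hσ]
    rw [hσ, coeff_lineRestrict_comm hf (by rw [hcard]; nlinarith) w v q.le_succ,
      Nat.add_sub_cancel_left] at hcoeff
    exact hcoeff.symm
  have hadd (u v w : ι → F) :
      e * polarForm f (u + v) w = e * polarForm f u w + e * polarForm f v w := by
    rw [polarForm_add_left, mul_add]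
  refine ⟨hadd, fun u v w => ?_, fun a v w => ?_, hsymm⟩
  · simp only [hsymm v u, hsymm w u, hsymm (v + w) u, hadd, ← hσ, map_add]
  · simp only [polarForm_smul_left, mul_left_comm]

end Hermitian

section Counting

open scoped Classical Finset

theorem mem_projPts {F : Type} [Field F] {n : ℕ} {W : Submodule F (Fin n → F)}
    {P : Projectivization F (Fin n → F)} : P ∈ projPts W ↔ P.rep ∈ W := by
  rw [projPts, Set.mem_ofPred, Projectivization.submodule_eq, Submodule.span_singleton_le_iff_mem]

theorem card_ne_zero_and_mem {F V : Type*} [Field F] [Fintype F] [AddCommGroup V] [Module F V]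
    [Fintype V] {Z : Set V} (hZ : ∀ a : F, a ≠ 0 → ∀ v, a • v ∈ Z ↔ v ∈ Z) :
    #{v | v ≠ 0 ∧ v ∈ Z} = (Fintype.card F - 1) * {P : Projectivization F V | P.rep ∈ Z}.ncard := by
  let g (x : Fˣ × {P : Projectivization F V // P.rep ∈ Z}) : {v // v ≠ 0 ∧ v ∈ Z} :=
    ⟨(x.1 : F) • x.2.1.rep, smul_ne_zero x.1.ne_zero x.2.1.rep_nonzero,
      (hZ _ x.1.ne_zero _).2 x.2.2⟩
  have hg : Function.Bijective g := by
    constructor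
    · rintro ⟨a, P, hP⟩ ⟨b, P', hP'⟩ h
      have h : (a : F) • P.rep = (b : F) • P'.rep := congrArg Subtype.val h
      obtain rfl : P = P' := by
        rw [← P.mk_rep, ← P'.mk_rep, Projectivization.mk_eq_mk_iff']
        exact ⟨(a : F)⁻¹ * b, by rw [mul_smul, ← h, inv_smul_smul₀ a.ne_zero]⟩
      rw [Units.ext (smul_left_injective F P.rep_nonzero h)]
    · rintro ⟨v, hv, hvZ⟩
      obtain ⟨a, ha⟩ := Projectivization.exists_smul_eq_mk_rep F v hv
      refine ⟨⟨a⁻¹, .mk F v hv, ha ▸ (hZ _ a.ne_zero v).2 hvZ⟩, Subtype.ext ?_⟩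
      change ((a⁻¹ : Fˣ) : F) • (Projectivization.mk F v hv).rep = v
      rw [← ha]
      exact inv_smul_smul a v
  rw [← Fintype.card_subtype, ← Nat.card_eq_fintype_card, ← Nat.card_congr (Equiv.ofBijective g hg),
    Nat.card_prod, Nat.card_units, Nat.card_eq_fintype_card]
  rfl

theorem card_zeros_mem {F : Type} [Field F] [Fintype F] {n d : ℕ} {f : MvPolynomial (Fin n) F}
    (hf : f.IsHomogeneous d) (hd : d ≠ 0) (W : Submodule F (Fin n → F)) :
    #{v | v ∈ W ∧ eval v f = 0} =
      (Fintype.card F - 1) * (hypersurfacePts f ∩ projPts W).ncard + 1 := by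
  let Z : Set (Fin n → F) := {v | v ∈ W ∧ eval v f = 0}
  have hZ (a : F) (ha : a ≠ 0) (v : Fin n → F) : a • v ∈ Z ↔ v ∈ Z := by
    change a • v ∈ W ∧ eval (a • v) f = 0 ↔ v ∈ W ∧ eval v f = 0
    rw [W.smul_mem_iff ha, eval_smul_of_isHomogeneous hf, mul_eq_zero,
      or_iff_right (pow_ne_zero d ha)]
  have hzero : eval (0 : Fin n → F) f = 0 := by
    rw [← zero_smul F 0, eval_smul_of_isHomogeneous hf, zero_pow hd, zero_mul]
  have hpts : hypersurfacePts f ∩ projPts W = {P | P.rep ∈ Z} :=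
    Set.ext fun _ => and_comm.trans (and_congr_left' mem_projPts)
  rw [hpts, ← card_ne_zero_and_mem hZ, ← Finset.card_erase_add_one
    ((Finset.mem_filter_univ (0 : Fin n → F)).2 ⟨W.zero_mem, hzero⟩)]
  refine congrArg (Finset.card · + 1) (Finset.ext fun v => ?_)
  simp only [Finset.mem_erase, Finset.mem_filter_univ]
  rfl

theorem mul_card_translates_eq {F V ι : Type*} [Ring F] [AddCommGroup V] [Module F V] [Fintype V]
    [Fintype ι] {W : Submodule F V} {p : V → Prop} {q : ℕ}
    (hdens : q * #{z | z ∉ W ∧ p z} = #{z : V | z ∉ W}) {τ : ι → V} (hτ : ∀ i, τ i ∈ W)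
    (hle : ∀ u ∉ W, q * #{i | p (u + τ i)} ≤ Fintype.card ι) {u : V} (hu : u ∉ W) :
    q * #{i | p (u + τ i)} = Fintype.card ι := by
  have havg : ∑ u : V with u ∉ W, q * #{i | p (u + τ i)} = ∑ u : V with u ∉ W, Fintype.card ι :=
    calc
      _ = q * ∑ u : V, #{i | u + τ i ∉ W ∧ p (u + τ i)} := by
        rw [← Finset.mul_sum, Finset.sum_filter, Finset.sum_congr rfl fun u _ => ?_]
        by_cases hu : u ∈ W <;> simp [W.add_mem_iff_left (hτ _), hu]
      _ = Fintype.card ι * (q * #{z | z ∉ W ∧ p z}) := by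
        rw [mul_left_comm, ← sum_card_filter_perm (fun i => Equiv.addRight (τ i))
          fun z => z ∉ W ∧ p z]
        rfl
      _ = _ := by rw [hdens, Finset.sum_const, smul_eq_mul, mul_comm]
  exact (Finset.sum_eq_sum_iff_of_le fun u hu => hle u (Finset.mem_filter.1 hu).2).1 havg u
    (by simpa using hu)

/-- The Bose–Burton argument: projecting from the point `⟨a + b⟩` identifies `⟨a⟩` with `⟨b⟩`, so
some line through that point is missed. -/
theorem exists_external_line {F V : Type*} [Field F] [Fintype F] [AddCommGroup V] [Module F V]
    [Fintype V] {Z : Set V} (hZ : ∀ (s : F), ∀ v ∈ Z, s • v ∈ Z)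
    (hcard : Fintype.card F * Z.ncard = Fintype.card V) {a b : V} (ha : a ∈ Z) (hb : b ∈ Z)
    (hab : a + b ∉ Z) : ∃ A : Fin 2 → V, ∀ x : Fin 2 → F, x ≠ 0 → ∑ k, x k • A k ∉ Z := by
  have hsmul {s : F} (hs : s ≠ 0) {v : V} (h : s • v ∈ Z) : v ∈ Z :=
    inv_smul_smul₀ hs v ▸ hZ s⁻¹ _ h
  have hc : a + b ≠ 0 := fun h => hab (h ▸ zero_smul F a ▸ hZ 0 a ha)
  let L := Submodule.span F {a + b}
  have hquot : Nat.card Z = Nat.card (V ⧸ L) := by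
    have hV := Submodule.card_eq_card_quotient_mul_card L
    rw [Nat.card_eq_fintype_card (α := L), card_eq_pow_finrank (K := F), finrank_span_singleton hc,
      pow_one, Nat.card_eq_fintype_card (α := V), ← hcard, mul_comm,
      mul_comm (Fintype.card F)] at hV
    exact Nat.eq_of_mul_eq_mul_right Fintype.card_pos hV
  have hsurj : ¬ Function.Surjective fun v : Z => L.mkQ v := fun hs => by
    have hinj := ((Nat.bijective_iff_surjective_and_card _).2 ⟨hs, hquot⟩).1
    have heq := @hinj ⟨a, ha⟩ ⟨-b, neg_one_smul F b ▸ hZ (-1) b hb⟩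
      ((Submodule.Quotient.eq L).2 ((sub_neg_eq_add a b).symm ▸
        Submodule.mem_span_singleton_self (a + b)))
    exact hc (eq_neg_iff_add_eq_zero.1 (congrArg Subtype.val heq))
  obtain ⟨y, hy⟩ := not_forall.1 hsurj
  obtain ⟨u, rfl⟩ := L.mkQ_surjective y
  refine ⟨![a + b, u], fun x hx hmem => ?_⟩
  simp only [Fin.sum_univ_two, Matrix.cons_val_zero, Matrix.cons_val_one] at hmem
  by_cases h1 : x 1 = 0
  · rw [h1, zero_smul, add_zero] at hmem
    refine hab (hsmul (fun h0 => hx (funext fun k => ?_)) hmem)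
    fin_cases k
    exacts [h0, h1]
  · refine hy ⟨⟨(x 1)⁻¹ • (x 0 • (a + b) + x 1 • u), hZ _ _ hmem⟩, ?_⟩
    refine (Submodule.Quotient.eq L).2 (Submodule.mem_span_singleton.2 ⟨(x 1)⁻¹ * x 0, ?_⟩)
    change _ = (x 1)⁻¹ • (x 0 • (a + b) + x 1 • u) - u
    rw [smul_add _ (x 0 • _), inv_smul_smul₀ h1, add_sub_cancel_right, smul_smul]

end Counting

section ZeroSubspace

open scoped Classical Finset

variable {F ι : Type*} [Field F] [Fintype F] [Fintype ι] {q : ℕ} {f : MvPolynomial ι F}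
  {W : Submodule F (ι → F)}

theorem exists_plane_zeros_ge (hcard : Fintype.card F = q ^ 2)
    (hdens : q * #{z | z ∉ W ∧ eval z f = 0} = #{z | z ∉ W}) (hW : W ≠ ⊤) {A : Fin 2 → ι → F}
    (hA : ∀ k, A k ∈ W) :
    ∃ v, q ^ 3 ≤ #{x : Fin 2 → F | eval (v + ∑ k, x k • A k) f = 0} := by
  by_contra! hlt
  have hcard2 : Fintype.card (Fin 2 → F) = q * q ^ 3 := by
    rw [Fintype.card_pi_const, hcard]; ring
  obtain ⟨u, -, hu⟩ := SetLike.exists_of_lt hW.lt_top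
  have heq := mul_card_translates_eq (p := fun z => eval z f = 0) hdens
    (fun x : Fin 2 → F => W.sum_mem fun k _ => W.smul_mem (x k) (hA k))
    (fun u _ => hcard2 ▸ Nat.mul_le_mul_left q (hlt u).le) hu
  have hq : 0 < q := Nat.pos_of_ne_zero fun h => by
    simp [h] at hcard
  exact (hlt u).ne (Nat.eq_of_mul_eq_mul_left hq (heq.trans hcard2))

theorem eval_add_eq_zero (hcard : Fintype.card F = q ^ 2) (hq : 2 < q)
    (hf : f.IsHomogeneous (q + 1)) (hW : W ≠ ⊤)
    (hWcard : Fintype.card F * {v | v ∈ W ∧ eval v f = 0}.ncard = Nat.card W)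
    (hdens : q * #{z | z ∉ W ∧ eval z f = 0} = #{z | z ∉ W}) {a b : ι → F} (ha : a ∈ W)
    (hb : b ∈ W) (hfa : eval a f = 0) (hfb : eval b f = 0) : eval (a + b) f = 0 := by
  by_contra hab
  have hZcard : Fintype.card F * {w : W | eval (w : ι → F) f = 0}.ncard = Fintype.card W := by
    rw [← Nat.card_eq_fintype_card (α := W), ← hWcard]
    exact congrArg _ ((Set.ncard_subtype (· ∈ W) {v | eval v f = 0}).trans
      (congrArg Set.ncard (Set.inter_comm _ _)))
  obtain ⟨A, hA⟩ := exists_external_line (Z := {w : W | eval (w : ι → F) f = 0})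
    (fun s v (hv : eval (v : ι → F) f = 0) => by
      change eval (s • (v : ι → F)) f = 0
      rw [eval_smul_of_isHomogeneous hf, hv, mul_zero])
    hZcard (a := ⟨a, ha⟩) (b := ⟨b, hb⟩) hfa hfb hab
  obtain ⟨v, hv⟩ := exists_plane_zeros_ge hcard hdens hW fun k => (A k).2
  refine hv.not_gt (card_affine_plane_zeros_lt hcard hq hf (fun x hx => ?_) v)
  simpa using hA x hx

theorem exists_submodule_forall_eval_eq_zero_iff (hcard : Fintype.card F = q ^ 2) (hq : 2 < q)
    (hf : f.IsHomogeneous (q + 1)) (hW : W ≠ ⊤)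
    (hWcard : Fintype.card F * {v | v ∈ W ∧ eval v f = 0}.ncard = Nat.card W)
    (hdens : q * #{z | z ∉ W ∧ eval z f = 0} = #{z | z ∉ W}) :
    ∃ U ≤ W, ∀ v ∈ W, eval v f = 0 ↔ v ∈ U := by
  have hsmul (s : F) {v : ι → F} (hv : eval v f = 0) : eval (s • v) f = 0 := by
    rw [eval_smul_of_isHomogeneous hf, hv, mul_zero]
  let U : Submodule F (ι → F) :=
    { carrier := {v | v ∈ W ∧ eval v f = 0}
      zero_mem' := ⟨W.zero_mem, by
        rw [← zero_smul F 0, eval_smul_of_isHomogeneous hf, zero_pow q.succ_ne_zero, zero_mul]⟩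
      add_mem' := fun ha hb => ⟨W.add_mem ha.1 hb.1,
        eval_add_eq_zero hcard hq hf hW hWcard hdens ha.1 hb.1 ha.2 hb.2⟩
      smul_mem' := fun s v hv => ⟨W.smul_mem s hv.1, hsmul s hv.2⟩ }
  exact ⟨U, fun _ hv => hv.1, fun v hv => ⟨fun h => ⟨hv, h⟩, And.right⟩⟩

end ZeroSubspace

section Cosets

open scoped Classical Finset

variable {F ι : Type*} [Field F] {q d : ℕ} {f : MvPolynomial ι F} {U W : Submodule F (ι → F)}

theorem exists_eval_add_ne_zero [Finite ι] (hf : f.IsHomogeneous (d + 1))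
    (hU : ∀ x ∈ U, eval x f = 0)
    (hmax : ∀ M : Submodule F (ι → F), finrank F M = finrank F U + 1 → ∃ v ∈ M, eval v f ≠ 0)
    {u : ι → F} (hu : u ∉ U) : ∃ x ∈ U, eval (u + x) f ≠ 0 := by
  by_contra! hzero
  obtain ⟨v, hv, hfv⟩ := hmax (U ⊔ F ∙ u) (Submodule.finrank_sup_span_singleton hu)
  obtain ⟨x, hx, y, hy, rfl⟩ := Submodule.mem_sup.1 hv
  obtain ⟨a, rfl⟩ := Submodule.mem_span_singleton.1 hy
  refine hfv ?_
  obtain rfl | ha := eq_or_ne a 0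
  · rw [zero_smul, add_zero, hU x hx]
  · have heq : x + a • u = a • (u + a⁻¹ • x) := by rw [smul_add, smul_inv_smul₀ ha, add_comm]
    rw [heq, eval_smul_of_isHomogeneous hf, hzero _ (U.smul_mem _ hx), mul_zero]

variable [Fintype F]

theorem hasLineDegree_coset [Finite ι] (hf : f.IsHomogeneous (d + 1))
    (hd : d + 2 < Fintype.card F) (hU : ∀ x ∈ U, eval x f = 0) (u : ι → F) :
    HasLineDegree d (fun x : U => eval (u + (x : ι → F)) f)
      fun x : U => polarForm f u x := fun x w => by
  have hpolar : polarForm f (x : ι → F) w = 0 := by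
    have hzero : lineRestrict (w : ι → F) x f = 0 := by
      refine Polynomial.eq_of_natDegree_lt_card_of_eval_eq _ 0 Function.injective_id (fun s => ?_)
        (max_lt ?_ ?_)
      · rw [eval_lineRestrict, Polynomial.eval_zero]
        exact hU _ (U.add_mem w.2 (U.smul_mem s x.2))
      · exact ((natDegree_lineRestrict_le f _ _).trans hf.totalDegree_le).trans_lt (by lia)
      · exact Polynomial.natDegree_zero.trans_lt (by lia)
    rw [polarForm, hzero, Polynomial.coeff_zero]
  refine ⟨lineRestrict (u + (x : ι → F)) w f, ?_, ?_, fun s => ?_⟩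
  · have htop : (lineRestrict (u + (x : ι → F)) (w : ι → F) f).coeff (d + 1) = 0 := by
      rw [coeff_lineRestrict_comm hf hd _ _ le_rfl, Nat.sub_self, coeff_zero_lineRestrict, hU _ w.2]
    exact Polynomial.natDegree_le_pred
      ((natDegree_lineRestrict_le f _ _).trans hf.totalDegree_le) htop
  · rw [coeff_lineRestrict_comm hf hd _ _ d.le_succ, Nat.add_sub_cancel_left]
    change polarForm f (u + (x : ι → F)) w = _
    rw [polarForm_add_left, hpolar, add_zero]
  · simp only [eval_lineRestrict, Submodule.coe_add, Submodule.coe_smul, add_assoc]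

variable [Fintype ι]

theorem mul_card_coset_zeros_eq (hcard : Fintype.card F = q ^ 2) (hq : 2 < q)
    (hf : f.IsHomogeneous (q + 1)) (hUW : U ≤ W) (hU : ∀ x ∈ U, eval x f = 0)
    (hmax : ∀ M : Submodule F (ι → F), finrank F M = finrank F U + 1 → ∃ v ∈ M, eval v f ≠ 0)
    (hdens : q * #{z | z ∉ W ∧ eval z f = 0} = #{z | z ∉ W}) {u : ι → F} (hu : u ∉ W) :
    q * #{x : U | eval (u + (x : ι → F)) f = 0} = Fintype.card U := by
  refine mul_card_translates_eq (p := fun z => eval z f = 0) hdens (fun x : U => hUW x.2)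
    (fun u hu => ?_) hu
  obtain ⟨x, hx, hne⟩ := exists_eval_add_ne_zero hf hU hmax (mt (@hUW u) hu)
  have hle := (hasLineDegree_coset hf (by rw [hcard]; nlinarith) hU u).card_mul_card_le_of_ne_zero
    (u := ⟨x, hx⟩) (by lia) (by rw [hcard]; nlinarith) hne
  rw [hcard, pow_two, mul_assoc] at hle
  exact Nat.le_of_mul_le_mul_left hle (by lia)

end Cosets

section CosetFunctional

open scoped Classical Finset

variable {F ι : Type*} [Field F] [Fintype F] {q d : ℕ} {σ : F →+* F} {f : MvPolynomial ι F}

theorem coeff_lineRestrict_of_eval_eq (hdF : d < Fintype.card F) (hf : f.totalDegree ≤ d)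
    {G : Polynomial F} (hG : G.natDegree ≤ d) {u x : ι → F} {a : F}
    (h : ∀ s : F, eval (u + s • x) f = G.eval (s * a)) (j : ℕ) :
    (lineRestrict u x f).coeff j = G.coeff j * a ^ j := by
  have heq : lineRestrict u x f = G.comp (Polynomial.C a * Polynomial.X) := by
    refine Polynomial.eq_of_natDegree_lt_card_of_eval_eq _ _ Function.injective_id (fun s => ?_) ?_
    · simp only [eval_lineRestrict, id, h, Polynomial.eval_comp, Polynomial.eval_mul,
        Polynomial.eval_C, Polynomial.eval_X, mul_comm a]
    · refine max_lt (((natDegree_lineRestrict_le f u x).trans hf).trans_lt hdF) ?_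
      refine lt_of_le_of_lt (Polynomial.natDegree_comp_le.trans ?_) hdF
      exact (Nat.mul_le_mul hG ((Polynomial.natDegree_C_mul_le _ _).trans
        Polynomial.natDegree_X_le)).trans (mul_one d).le
  rw [heq, Polynomial.comp_C_mul_X_coeff]

variable [Fintype ι] {U W : Submodule F (ι → F)}

theorem exists_dual_eq_frobenius_polarForm (hcard : Fintype.card F = q ^ 2) (hq : 2 < q)
    (hσ : ∀ x, σ x = x ^ q) (hf : f.IsHomogeneous (q + 1)) (hU : ∀ x ∈ U, eval x f = 0)
    {u : ι → F} (hzeros : q * #{x : U | eval (u + (x : ι → F)) f = 0} = Fintype.card U) :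
    ∃ (L : Dual F U) (G : Polynomial F), (∀ x : U, L x = σ (polarForm f u x)) ∧
      (∀ x : U, eval (u + (x : ι → F)) f = G.eval (L x)) ∧ G.Monic ∧ G.natDegree = q ∧
      ∃ s t, s ≠ t ∧ G.eval s = 0 ∧ G.eval t = 0 := by
  have hQ : q + 2 < Fintype.card F := by rw [hcard]; nlinarith
  obtain ⟨L, G, hGdeg, hGzeros, hG⟩ := (hasLineDegree_coset hf hQ hU u).exists_eq_eval_dual hq.le
    (by rw [hcard, pow_two]) (by rw [hcard, pow_two, mul_assoc, hzeros])
  set κ := G.leadingCoeff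
  have hκ : σ κ ≠ 0 :=
    (map_ne_zero σ).2 (Polynomial.leadingCoeff_ne_zero.2 (Polynomial.ne_zero_of_natDegree_gt
      (hGdeg ▸ (Nat.zero_lt_two.trans hq))))
  have hpolar (x : U) : polarForm f u x = κ * L x ^ q := by
    have hcoeff := coeff_lineRestrict_of_eval_eq (u := u) (x := x) (a := L x) (by lia)
      hf.totalDegree_le (hGdeg.le.trans q.le_succ)
      (fun s => by rw [← smul_eq_mul, ← map_smul]; exact hG (s • x)) q
    rw [coeff_lineRestrict_comm hf (by lia) _ _ q.le_succ, Nat.add_sub_cancel_left] at hcoeff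
    rw [polarForm, hcoeff, ← hGdeg, Polynomial.coeff_natDegree]
  have hdeg : (Polynomial.C (σ κ)⁻¹ * Polynomial.X).natDegree = 1 :=
    Polynomial.natDegree_C_mul_X _ (inv_ne_zero hκ)
  have heval (s : F) :
      (G.comp (Polynomial.C (σ κ)⁻¹ * Polynomial.X)).eval (σ κ * s) = G.eval s := by
    simp [hκ]
  refine ⟨σ κ • L, G.comp (Polynomial.C (σ κ)⁻¹ * Polynomial.X), fun x => ?_,
    fun x => (hG x).trans (heval (L x)).symm, ?_, ?_, ?_⟩
  · rw [hpolar, map_mul, ← hσ, frobenius_frobenius hcard hσ, LinearMap.smul_apply, smul_eq_mul]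
  · have hκq : κ = σ κ ^ q := by rw [← hσ, frobenius_frobenius hcard hσ]
    rw [Polynomial.Monic, Polynomial.leadingCoeff_comp (by rw [hdeg]; exact one_ne_zero),
      Polynomial.leadingCoeff_C_mul_X, hGdeg, inv_pow, ← hκq]
    exact mul_inv_cancel₀ fun h => hκ (h ▸ map_zero σ)
  · rw [Polynomial.natDegree_comp, hdeg, hGdeg, mul_one]
  · obtain ⟨s, hs, t, ht, hst⟩ := Finset.one_lt_card.1 (hGzeros ▸ (by lia : 1 < q))
    exact ⟨σ κ * s, σ κ * t, (mul_right_injective₀ hκ).ne hst,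
      (heval s).trans (Finset.mem_filter.1 hs).2, (heval t).trans (Finset.mem_filter.1 ht).2⟩

theorem exists_semilinearMap_eq_frobenius_polarForm (hcard : Fintype.card F = q ^ 2) (hq : 2 < q)
    (hσ : ∀ x, σ x = x ^ q) (hf : f.IsHomogeneous (q + 1)) (hU : ∀ x ∈ U, eval x f = 0)
    (hW : W ≠ ⊤)
    (hzeros : ∀ u ∉ W, q * #{x : U | eval (u + (x : ι → F)) f = 0} = Fintype.card U) :
    ∃ Λ : (ι → F) →ₛₗ[σ] Dual F U, ∀ u (x : U), Λ u x = σ (polarForm f u x) := by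
  have hnotMem {u : ι → F} (hu : u ∉ W) : ∃ L : Dual F U, ∀ x : U, L x = σ (polarForm f u x) := by
    obtain ⟨L, -, hL, -⟩ := exists_dual_eq_frobenius_polarForm hcard hq hσ hf hU (hzeros u hu)
    exact ⟨L, hL⟩
  have hdual (u : ι → F) : ∃ L : Dual F U, ∀ x : U, L x = σ (polarForm f u x) := by
    by_cases hu : u ∈ W
    · obtain ⟨z, -, hz⟩ := SetLike.exists_of_lt hW.lt_top
      obtain ⟨L, hL⟩ := hnotMem hz
      obtain ⟨M, hM⟩ := hnotMem (mt (W.add_mem_iff_right hu).1 hz)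
      exact ⟨M - L, fun x => by
        rw [LinearMap.sub_apply, hM, hL, polarForm_add_left, map_add, add_sub_cancel_right]⟩
    · exact hnotMem hu
  choose L hL using hdual
  exact ⟨{
    toFun := L
    map_add' := fun u v => LinearMap.ext fun x => by
      rw [LinearMap.add_apply, hL, hL, hL, polarForm_add_left, map_add]
    map_smul' := fun a u => LinearMap.ext fun x => by
      rw [LinearMap.smul_apply, hL, hL, polarForm_smul_left, map_mul, smul_eq_mul] }, hL⟩

end CosetFunctional

section LinearAlgebra

open scoped Classical Finset

theorem ker_eq_and_surjective_of_card_eq {G H : Type*} [AddGroup G] [AddGroup H] [Finite G]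
    [Finite H] {φ : G →+ H} {K : AddSubgroup G} (hK : φ.ker ≤ K)
    (hcard : Nat.card G = Nat.card K * Nat.card H) :
    φ.ker = K ∧ Function.Surjective φ := by
  have hker : Nat.card φ.ker * Nat.card φ.range = Nat.card K * Nat.card H := by
    rw [← AddSubgroup.index_ker, AddSubgroup.card_mul_index, hcard]
  have hkerK : φ.ker = K := by
    refine AddSubgroup.eq_of_le_of_card_ge hK
      (Nat.le_of_mul_le_mul_right ?_ (Nat.card_pos (α := H)))
    exact hker.ge.trans (Nat.mul_le_mul_left _ (AddSubgroup.card_le_card_addGroup φ.range))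
  refine ⟨hkerK, AddMonoidHom.range_eq_top.1 (AddSubgroup.eq_top_of_card_eq _ ?_)⟩
  rw [hkerK] at hker
  exact Nat.eq_of_mul_eq_mul_left Nat.card_pos hker

variable {F V : Type*} [Field F] [AddCommGroup V] [Module F V]

theorem pi_surjective_of_linearIndependent {κ : Type*} [Finite κ] {L : κ → Dual F V}
    (hL : LinearIndependent F L) : Function.Surjective (LinearMap.pi L) := by
  have hspan := span_flip_eq_top_iff_linearIndependent.2
    (hL.map' (LinearMap.ltoFun F V F F) (LinearMap.ker_eq_bot.2 DFunLike.coe_injective))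
  rw [← LinearMap.range_eq_top, ← hspan]
  exact (Submodule.span_eq (LinearMap.range (LinearMap.pi L))).symm

theorem ne_zero_of_mul_card_eq [Fintype V] {L : Dual F V} {φ : V → F} {G : F → F} {q : ℕ}
    (hq : 1 < q) (hzeros : q * #{x | φ x = 0} = Fintype.card V) (hφ : ∀ x, φ x = G (L x)) :
    L ≠ 0 := by
  rintro rfl
  simp only [hφ, LinearMap.zero_apply, Finset.filter_const] at hzeros
  have hpos : 0 < Fintype.card V := Fintype.card_pos
  split_ifs at hzeros
  · rw [Finset.card_univ] at hzeros
    nlinarith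
  · rw [Finset.card_empty] at hzeros
    lia

end LinearAlgebra

section PencilCoefficients

variable {F ι : Type*} [Field F] [Fintype F] {q : ℕ} {σ : F →+* F} {f : MvPolynomial ι F}
  {U W : Submodule F (ι → F)} {Λ : (ι → F) →ₛₗ[σ] Dual F U} {G : (ι → F) → Polynomial F}

theorem natDegree_add_le_of_eval_mul_pow_eq {P R : Polynomial F} {m n : ℕ} (hP : P ≠ 0)
    (hPn : P.natDegree + n < Fintype.card F) (hR : R.natDegree ≤ m) (hm : m < Fintype.card F)
    (h : ∀ s, P.eval s * s ^ n = R.eval s) : P.natDegree + n ≤ m := by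
  have hPR : P * Polynomial.X ^ n = R := by
    refine Polynomial.eq_of_natDegree_lt_card_of_eval_eq _ _ Function.injective_id (fun s => ?_) ?_
    · rw [Polynomial.eval_mul, Polynomial.eval_pow, Polynomial.eval_X, id, h]
    · rw [Polynomial.natDegree_mul_X_pow n hP]
      exact max_lt hPn (hR.trans_lt hm)
  rwa [← Polynomial.natDegree_mul_X_pow n hP, hPR]

theorem exists_eval_pencil_eq_coeff (hcard : Fintype.card F = q ^ 2) (hq : 2 < q)
    (hσ : ∀ x, σ x = x ^ q) (hf : f.IsHomogeneous (q + 1)) (hΛ : ∀ u ∈ W, Λ u = 0)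
    (hGdeg : ∀ u ∉ W, (G u).natDegree = q)
    (hG : ∀ u ∉ W, ∀ x : U, eval (u + (x : ι → F)) f = (G u).eval (Λ u x)) {y z : ι → F}
    (hyz : LinearIndependent F ![Λ y, Λ z]) {j : ℕ} (hj : j < q) :
    ∃ P : Polynomial F, (P ≠ 0 → P.natDegree + q * j ≤ q + 1 - j) ∧
      ∀ s, P.eval s = (G (y + s • (z - y))).coeff j := by
  have hQ : q + 2 < Fintype.card F := by rw [hcard]; nlinarith
  have hdeg : q + 1 - j + q * j < Fintype.card F := by
    obtain ⟨t, ht⟩ := Nat.exists_eq_add_of_lt hj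
    rw [hcard, show q + 1 - j = t + 2 by lia]
    nlinarith
  obtain ⟨x, hx⟩ := pi_surjective_of_linearIndependent hyz ![1, 0]
  obtain ⟨k, hk⟩ := pi_surjective_of_linearIndependent hyz ![0, 1]
  have hyx : Λ y x = 1 := congrFun hx 0
  have hzx : Λ z x = 0 := congrFun hx 1
  have hyk : Λ y k = 0 := congrFun hk 0
  have hzk : Λ z k = 1 := congrFun hk 1
  have hΛk (s : F) : Λ (y + s • (z - y)) k = s ^ q := by
    simp [hyk, hzk, hσ]
  have hΛxk (s : F) : Λ (y + s • (z - y)) (x + k) = 1 := by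
    simp [hyx, hzx, hyk, hzk]
  have hcoeff (s : F) (v : U) :
      (lineRestrict (v : ι → F) (y + s • (z - y)) f).coeff (q + 1 - j) =
        (G (y + s • (z - y))).coeff j * Λ (y + s • (z - y)) v ^ j := by
    have hu : y + s • (z - y) ∉ W := fun hu => by simpa [hΛ _ hu] using hΛxk s
    rw [← coeff_lineRestrict_comm hf hQ _ _ (hj.le.trans q.le_succ)]
    refine coeff_lineRestrict_of_eval_eq (d := q + 1) (by lia) hf.totalDegree_le
      ((hGdeg _ hu).le.trans q.le_succ) (fun t => ?_) j
    rw [← smul_eq_mul, ← map_smul, ← hG _ hu, Submodule.coe_smul]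
  obtain ⟨P, hPdeg, hP⟩ := exists_natDegree_le_eval_eq_coeff_lineRestrict f
    ((x + k : U) : ι → F) y (z - y) (q + 1 - j)
  obtain ⟨R, hRdeg, hR⟩ := exists_natDegree_le_eval_eq_coeff_lineRestrict f
    (k : ι → F) y (z - y) (q + 1 - j)
  have hPcoeff (s : F) : P.eval s = (G (y + s • (z - y))).coeff j := by
    rw [hP, hcoeff, hΛxk, one_pow, mul_one]
  refine ⟨P, fun hP0 => ?_, hPcoeff⟩
  refine natDegree_add_le_of_eval_mul_pow_eq hP0 (by lia) hRdeg (by lia) fun s => ?_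
  rw [hPcoeff, hR, hcoeff, hΛk, pow_mul]

theorem coeff_eq_of_linearIndependent (hcard : Fintype.card F = q ^ 2) (hq : 2 < q)
    (hσ : ∀ x, σ x = x ^ q) (hf : f.IsHomogeneous (q + 1)) (hΛ : ∀ u ∈ W, Λ u = 0)
    (hGdeg : ∀ u ∉ W, (G u).natDegree = q)
    (hG : ∀ u ∉ W, ∀ x : U, eval (u + (x : ι → F)) f = (G u).eval (Λ u x)) {y z : ι → F}
    (hyz : LinearIndependent F ![Λ y, Λ z]) :
    (G y).coeff 1 = (G z).coeff 1 ∧ ∀ j, 2 ≤ j → j < q → (G y).coeff j = 0 := by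
  have hpencil {j : ℕ} (hj : j < q) :=
    exists_eval_pencil_eq_coeff hcard hq hσ hf hΛ hGdeg hG hyz hj
  constructor
  · obtain ⟨P, hPdeg, hP⟩ := hpencil (j := 1) (by lia)
    have hconst : P.natDegree = 0 := by
      by_cases hP0 : P = 0
      · rw [hP0, Polynomial.natDegree_zero]
      · have := hPdeg hP0
        lia
    rw [Polynomial.eq_C_of_natDegree_eq_zero hconst] at hP
    simpa using (hP 0).symm.trans ((Polynomial.eval_C.trans Polynomial.eval_C.symm).trans (hP 1))
  · intro j hj hjq
    obtain ⟨P, hPdeg, hP⟩ := hpencil hjq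
    have hP0 : P = 0 := by
      by_contra hP0
      have := hPdeg hP0
      have := Nat.mul_le_mul_left q hj
      lia
    simpa [hP0] using (hP 0).symm

theorem coeff_eq_of_notMem (hcard : Fintype.card F = q ^ 2) (hq : 2 < q)
    (hσ : ∀ x, σ x = x ^ q) (hf : f.IsHomogeneous (q + 1)) (hΛ : ∀ u, Λ u = 0 ↔ u ∈ W)
    (hΛsurj : Function.Surjective Λ) (hU : 1 < finrank F U)
    (hGdeg : ∀ u ∉ W, (G u).natDegree = q)
    (hG : ∀ u ∉ W, ∀ x : U, eval (u + (x : ι → F)) f = (G u).eval (Λ u x)) {y z : ι → F}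
    (hy : y ∉ W) (hz : z ∉ W) :
    (G y).coeff 1 = (G z).coeff 1 ∧ ∀ j, 2 ≤ j → j < q → (G y).coeff j = 0 := by
  have hpair {y z : ι → F} (hyz : LinearIndependent F ![Λ y, Λ z]) :=
    coeff_eq_of_linearIndependent hcard hq hσ hf (fun u => (hΛ u).2) hGdeg hG hyz
  by_cases hyz : LinearIndependent F ![Λ y, Λ z]
  · exact hpair hyz
  have hy0 : Λ y ≠ 0 := mt (hΛ y).1 hy
  obtain ⟨a, ha⟩ : ∃ a : F, a • Λ y = Λ z := by
    simpa only [LinearIndependent.pair_iff' hy0, not_forall, not_not] using hyz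
  have ha0 : a ≠ 0 := fun h => hz ((hΛ z).1 (by rw [← ha, h, zero_smul]))
  obtain ⟨L, hL⟩ := exists_linearIndependent_pair_of_one_lt_finrank
    (hU.trans_eq Subspace.dual_finrank_eq.symm) hy0
  obtain ⟨v, rfl⟩ := hΛsurj L
  have hzv : LinearIndependent F ![Λ z, Λ v] := by
    have := (LinearIndependent.pair_smul_smul_iff ha0.isUnit isUnit_one).2 hL
    rwa [ha, one_smul] at this
  exact ⟨(hpair hL).1.trans (hpair hzv).1.symm, (hpair hL).2⟩

theorem eq_X_pow_add_C_mul_X_add_C {R : Type*} [Semiring R] {P : Polynomial R} {n : ℕ}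
    (hP : P.Monic) (hn : P.natDegree = n) (hn1 : 1 < n)
    (hcoeff : ∀ j, 2 ≤ j → j < n → P.coeff j = 0) :
    P = Polynomial.X ^ n + Polynomial.C (P.coeff 1) * Polynomial.X +
      Polynomial.C (P.coeff 0) := by
  have hlow : ∑ j ∈ Finset.range 2, Polynomial.C (P.coeff j) * Polynomial.X ^ j =
      ∑ j ∈ Finset.range n, Polynomial.C (P.coeff j) * Polynomial.X ^ j :=
    Finset.sum_subset (Finset.range_subset_range.2 hn1) fun j hj hj2 => by
      rw [hcoeff j (Nat.le_of_not_lt (mt Finset.mem_range.2 hj2)) (Finset.mem_range.1 hj), map_zero,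
        zero_mul]
  rw [Finset.sum_range_succ, Finset.sum_range_one, pow_zero, mul_one, pow_one] at hlow
  conv_lhs => rw [hP.as_sum, hn, ← hlow, add_comm (Polynomial.C _), ← add_assoc]

theorem exists_forall_eval_add_eq (hcard : Fintype.card F = q ^ 2) (hq : 2 < q)
    (hσ : ∀ x, σ x = x ^ q) (hf : f.IsHomogeneous (q + 1)) (hΛ : ∀ u, Λ u = 0 ↔ u ∈ W)
    (hΛsurj : Function.Surjective Λ) (hU : 1 < finrank F U)
    (hGmonic : ∀ u ∉ W, (G u).Monic) (hGdeg : ∀ u ∉ W, (G u).natDegree = q)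
    (hG : ∀ u ∉ W, ∀ x : U, eval (u + (x : ι → F)) f = (G u).eval (Λ u x)) :
    ∃ c, ∀ u ∉ W, ∀ t, (G u).eval t = σ t + c * t + eval u f := by
  obtain hW | ⟨z, hz⟩ := forall_or_exists_not (· ∈ W)
  · exact ⟨0, fun u hu => (hu (hW u)).elim⟩
  refine ⟨(G z).coeff 1, fun u hu t => ?_⟩
  have hcoeff := coeff_eq_of_notMem hcard hq hσ hf hΛ hΛsurj hU hGdeg hG hu hz
  have hzero : (G u).coeff 0 = eval u f := by
    simpa [Polynomial.coeff_zero_eq_eval_zero] using (hG u hu 0).symm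
  rw [eq_X_pow_add_C_mul_X_add_C (hGmonic u hu) (hGdeg u hu) (by lia) hcoeff.2, hcoeff.1, hzero, hσ]
  simp

end PencilCoefficients

section HermitianForm

open scoped Classical Finset

variable {F ι : Type*} [Field F] [Fintype F] [Fintype ι] {q : ℕ} {σ : F →+* F}
  {f : MvPolynomial ι F} {U W : Submodule F (ι → F)}

theorem eq_zero_iff_and_surjective_of_eq_polarForm (hcard : Fintype.card F = q ^ 2) (hq : 2 < q)
    (hσ : ∀ x, σ x = x ^ q) (hf : f.IsHomogeneous (q + 1)) (hU : ∀ x ∈ U, eval x f = 0)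
    (hdim : finrank F W + finrank F U = Fintype.card ι)
    (hzeros : ∀ u ∉ W, q * #{x : U | eval (u + (x : ι → F)) f = 0} = Fintype.card U)
    {Λ : (ι → F) →ₛₗ[σ] Dual F U} (hΛ : ∀ u (x : U), Λ u x = σ (polarForm f u x)) :
    (∀ u, Λ u = 0 ↔ u ∈ W) ∧ Function.Surjective Λ := by
  have hker : Λ.toAddMonoidHom.ker ≤ W.toAddSubgroup := fun u hu => by
    by_contra hW
    obtain ⟨L, G, hL, hG, -⟩ := exists_dual_eq_frobenius_polarForm hcard hq hσ hf hU (hzeros u hW)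
    refine ne_zero_of_mul_card_eq (G := (G.eval ·)) (by lia) (hzeros u hW) hG
      (LinearMap.ext fun x => ?_)
    rw [hL, ← hΛ]
    exact LinearMap.congr_fun hu x
  have : Finite (Dual F U) := Module.finite_of_finite F
  obtain ⟨hkerW, hsurj⟩ := ker_eq_and_surjective_of_card_eq hker <| by
    change Nat.card (ι → F) = Nat.card W * Nat.card (Dual F U)
    rw [Module.natCard_eq_pow_finrank (K := F) (V := W),
      Module.natCard_eq_pow_finrank (K := F) (V := Dual F U), Subspace.dual_finrank_eq, ← pow_add,
      hdim, Nat.card_fun, Nat.card_eq_fintype_card (α := ι)]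
  exact ⟨fun u => SetLike.ext_iff.1 hkerW u, hsurj⟩

theorem exists_forall_frobenius_mul_eval_eq (hcard : Fintype.card F = q ^ 2) (hq : 2 < q)
    (hσ : ∀ x, σ x = x ^ q) (hf : f.IsHomogeneous (q + 1)) (hU : ∀ x ∈ U, eval x f = 0)
    (hU1 : 1 < finrank F U) (hW : W ≠ ⊤)
    (hzeros : ∀ u ∉ W, q * #{x : U | eval (u + (x : ι → F)) f = 0} = Fintype.card U)
    {Λ : (ι → F) →ₛₗ[σ] Dual F U} (hΛ : ∀ u (x : U), Λ u x = σ (polarForm f u x))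
    (hΛW : ∀ u, Λ u = 0 ↔ u ∈ W) (hΛsurj : Function.Surjective Λ) :
    ∃ e ≠ 0, ∀ v, σ (e * eval v f) = e * eval v f := by
  have hcoset (u : ι → F) (hu : u ∉ W) :
      ∃ G : Polynomial F, (∀ x : U, eval (u + (x : ι → F)) f = G.eval (Λ u x)) ∧ G.Monic ∧
        G.natDegree = q ∧ ∃ s t, s ≠ t ∧ G.eval s = 0 ∧ G.eval t = 0 := by
    obtain ⟨L, G, hL, hG, h⟩ := exists_dual_eq_frobenius_polarForm hcard hq hσ hf hU (hzeros u hu)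
    exact ⟨G, fun x => by rw [hG, hL, hΛ], h⟩
  choose! G hG hGmonic hGdeg hroots using hcoset
  obtain ⟨c, hc⟩ := exists_forall_eval_add_eq hcard hq hσ hf hΛW hΛsurj hU1 hGmonic hGdeg hG
  obtain ⟨z, -, hz⟩ := SetLike.exists_of_lt hW.lt_top
  obtain ⟨s, t, hst, hs, ht⟩ := hroots z hz
  rw [hc z hz] at hs ht
  obtain ⟨e, he, hfix⟩ := exists_forall_frobenius_mul_eq hcard (by lia) hσ (sub_ne_zero.2 hst)
    (c := c) (by rw [map_sub]; linear_combination hs - ht)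
  refine ⟨e, he, frobenius_mul_eval_eq_of_forall_notMem hcard hq hf.totalDegree_le hW
    fun u hu => ?_⟩
  obtain ⟨r, -, -, hr, -⟩ := hroots u hu
  rw [hc u hu] at hr
  have hfu : eval u f = σ (-r) + c * -r := by rw [map_neg]; linear_combination hr
  rw [hfu, hfix]

end HermitianForm

section Nondegenerate

open scoped Classical Finset

variable {F ι : Type} [Field F] [Fintype F] {q : ℕ} {f : MvPolynomial ι F}
  {U W : Submodule F (ι → F)}

theorem polarForm_self_eq_eval [Finite ι] (hcard : Fintype.card F = q ^ 2)
    (hf : f.IsHomogeneous (q + 1)) (v : ι → F) : polarForm f v v = eval v f := by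
  have hq0 : (q : F) = 0 := by
    have := FiniteField.cast_card_eq_zero F
    rwa [hcard, Nat.cast_pow, pow_eq_zero_iff two_ne_zero] at this
  rw [polarForm_self hf, Nat.cast_add, hq0, Nat.cast_one, zero_add, one_mul]

theorem eq_zero_of_forall_polarForm_eq_zero [Finite ι] {σ : F →+* F}
    (hcard : Fintype.card F = q ^ 2) (hf : f.IsHomogeneous (q + 1))
    (hUW : ∀ x ∈ W, eval x f = 0 ↔ x ∈ U)
    {Λ : (ι → F) →ₛₗ[σ] Dual F U} (hΛ : ∀ u (x : U), Λ u x = σ (polarForm f u x))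
    (hΛW : ∀ u, Λ u = 0 ↔ u ∈ W) (hΛsurj : Function.Surjective Λ) {r : ι → F}
    (hr : ∀ w, polarForm f r w = 0) (hr' : ∀ w, polarForm f w r = 0) : r = 0 := by
  have hrW : r ∈ W := (hΛW r).1 (LinearMap.ext fun x => by
    rw [hΛ, hr, map_zero, LinearMap.zero_apply])
  have hrU : r ∈ U := (hUW r hrW).1 ((polarForm_self_eq_eval hcard hf r).symm.trans (hr r))
  have hdual : (⟨r, hrU⟩ : U) = 0 := (forall_dual_apply_eq_zero_iff F _).1 fun L => by
    obtain ⟨w, rfl⟩ := hΛsurj L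
    rw [hΛ, hr', map_zero]
  exact congrArg Subtype.val hdual

theorem finrank_add_one_of_card_mul_card {K V : Type*} [Field K] [Fintype K] [AddCommGroup V]
    [Module K V] [Finite V] {U W : Submodule K V}
    (h : Fintype.card K * Nat.card U = Nat.card W) : finrank K U + 1 = finrank K W := by
  rw [natCard_eq_pow_finrank (K := K) (V := U), natCard_eq_pow_finrank (K := K) (V := W),
    Nat.card_eq_fintype_card, ← pow_succ'] at h
  exact Nat.pow_right_injective (Fintype.one_lt_card (α := K)) h

theorem exists_nondegenerate_isHermitianForm [Fintype ι] (hcard : Fintype.card F = q ^ 2)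
    (hq : 2 < q) (hf : f.IsHomogeneous (q + 1)) (hdim : 2 * finrank F W = Fintype.card ι + 1)
    (hW3 : 3 ≤ finrank F W)
    (hWcard : Fintype.card F * {v | v ∈ W ∧ eval v f = 0}.ncard = Nat.card W)
    (hdens : q * #{z | z ∉ W ∧ eval z f = 0} = #{z | z ∉ W})
    (hmax : ∀ M : Submodule F (ι → F), finrank F M = finrank F W → ∃ v ∈ M, eval v f ≠ 0) :
    ∃ (η : (ι → F) → (ι → F) → F) (e : F), e ≠ 0 ∧ IsHermitianForm q η ∧
      (∀ v, η v v = e * eval v f) ∧ ∀ v, (∀ w, η v w = 0) → v = 0 := by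
  obtain ⟨σ, hσ⟩ := exists_ringHom_eq_pow hcard
  have hW : W ≠ ⊤ := by
    rintro rfl
    rw [finrank_top, finrank_fintype_fun_eq_card] at hdim hW3
    lia
  obtain ⟨U, hUW, hUiff⟩ := exists_submodule_forall_eval_eq_zero_iff hcard hq hf hW hWcard hdens
  have hU (x) (hx : x ∈ U) : eval x f = 0 := (hUiff x (hUW hx)).2 hx
  have hUdim : finrank F U + 1 = finrank F W := by
    have hset : {v | v ∈ W ∧ eval v f = 0} = U := Set.ext fun v =>
      ⟨fun h => (hUiff v h.1).1 h.2, fun h => ⟨hUW h, hU v h⟩⟩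
    exact finrank_add_one_of_card_mul_card (by rwa [hset, ← Nat.card_coe_set_eq] at hWcard)
  have hzeros (u) (hu : u ∉ W) := mul_card_coset_zeros_eq hcard hq hf hUW hU
    (by rwa [hUdim]) hdens hu
  obtain ⟨Λ, hΛ⟩ := exists_semilinearMap_eq_frobenius_polarForm hcard hq hσ hf hU hW hzeros
  obtain ⟨hΛW, hΛsurj⟩ :=
    eq_zero_iff_and_surjective_of_eq_polarForm hcard hq hσ hf hU (by lia) hzeros hΛ
  obtain ⟨e, he, hfix⟩ := exists_forall_frobenius_mul_eval_eq hcard hq hσ hf hU (by lia) hW hzeros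
    hΛ hΛW hΛsurj
  have hη := isHermitianForm_mul_polarForm hcard hq hσ hf hfix
  refine ⟨_, e, he, hη, fun v => by rw [polarForm_self_eq_eval hcard hf], fun r hr => ?_⟩
  have hr' (w) : e * polarForm f w r = 0 :=
    (hη.2.2.2 r w).trans ((congrArg (· ^ q) (hr w)).trans (zero_pow (by lia)))
  exact eq_zero_of_forall_polarForm_eq_zero hcard hf hUiff hΛ hΛW hΛsurj
    (fun w => (mul_eq_zero.1 (hr w)).resolve_left he)
    fun w => (mul_eq_zero.1 (hr' w)).resolve_left he

end Nondegenerate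

section HermitianVarieties

namespace IsHermitianForm

variable {F V : Type} [Field F] [AddCommGroup V] [Module F V] {q : ℕ} {η : V → V → F}

/-- The linear functional `η(·, w)`. -/
def leftHom (hη : IsHermitianForm q η) (w : V) : V →ₗ[F] F where
  toFun v := η v w
  map_add' u v := hη.1 u v w
  map_smul' a v := hη.2.2.1 a v w

/-- The radical of the restriction of the Hermitian form `η` to `W`. -/
def radicalOn (hη : IsHermitianForm q η) (W : Submodule F V) : Submodule F V :=
  W ⊓ ⨅ w ∈ W, LinearMap.ker (hη.leftHom w)

theorem mem_radicalOn (hη : IsHermitianForm q η) {W : Submodule F V} {v : V} :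
    v ∈ hη.radicalOn W ↔ v ∈ W ∧ ∀ w ∈ W, η v w = 0 := by
  simp only [radicalOn, Submodule.mem_inf, Submodule.mem_iInf, LinearMap.mem_ker]
  rfl

theorem add_smul_right (hη : IsHermitianForm q η) (v w u : V) (a : F) :
    η v (w + a • u) = η v w + a ^ q * η v u := by
  rw [hη.2.1, hη.2.2.2 (a • u) v, hη.2.2.1, mul_pow, ← hη.2.2.2 u v]

theorem finrank_radicalOn_le_one [FiniteDimensional F V] (hη : IsHermitianForm q η)
    (hnondeg : ∀ v, (∀ w, η v w = 0) → v = 0) {H : Submodule F V}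
    (hH : finrank F H + 1 = finrank F V) : finrank F (hη.radicalOn H) ≤ 1 := by
  obtain ⟨u, -, hu⟩ := SetLike.exists_of_lt (lt_top_iff_ne_top.2 fun h : H = ⊤ => by
    rw [h, finrank_top] at hH
    lia)
  have htop : H ⊔ F ∙ u = ⊤ := Submodule.eq_top_of_finrank_eq <| by
    rw [Submodule.finrank_sup_span_singleton hu, hH]
  have hinj : Function.Injective ((hη.leftHom u).domRestrict (hη.radicalOn H)) := by
    rw [← LinearMap.ker_eq_bot, LinearMap.ker_eq_bot']
    rintro ⟨v, hv⟩ (hvu : η v u = 0)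
    refine Subtype.ext (hnondeg v fun w => ?_)
    obtain ⟨h, hh, x, hx, rfl⟩ := Submodule.mem_sup.1 (htop ▸ Submodule.mem_top : w ∈ H ⊔ F ∙ u)
    obtain ⟨a, rfl⟩ := Submodule.mem_span_singleton.1 hx
    rw [hη.add_smul_right, hvu, (hη.mem_radicalOn.1 hv).2 h hh, mul_zero, add_zero]
  simpa only [finrank_self] using LinearMap.finrank_le_finrank_of_injective hinj

end IsHermitianForm

variable {F : Type} [Field F] {n q : ℕ} {f : MvPolynomial (Fin n) F}
  {η : (Fin n → F) → (Fin n → F) → F} {e : F}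

theorem isHermitianConeOn_finrank_radicalOn (hη : IsHermitianForm q η) (he : e ≠ 0)
    (hdiag : ∀ v, η v v = e * eval v f) (H : Submodule F (Fin n → F)) :
    IsHermitianConeOn q H (finrank F (hη.radicalOn H)) (hypersurfacePts f ∩ projPts H) := by
  refine ⟨η, hη, ⟨_, inf_le_left, rfl, fun v hv => hη.mem_radicalOn.trans (and_iff_right hv)⟩, ?_⟩
  ext P
  simp only [hypersurfacePts, projPts, Set.mem_inter_iff, Set.mem_ofPred_eq, hdiag, mul_eq_zero, he,
    false_or]
  exact and_comm

theorem isHermitianConeOn_zero_or_one (hη : IsHermitianForm q η) (he : e ≠ 0)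
    (hdiag : ∀ v, η v v = e * eval v f) (hnondeg : ∀ v, (∀ w, η v w = 0) → v = 0)
    {H : Submodule F (Fin n → F)} (hH : finrank F H + 1 = n) :
    IsHermitianConeOn q H 0 (hypersurfacePts f ∩ projPts H) ∨
      IsHermitianConeOn q H 1 (hypersurfacePts f ∩ projPts H) := by
  have hcone := isHermitianConeOn_finrank_radicalOn hη he hdiag H
  obtain h | h := Nat.le_one_iff_eq_zero_or_eq_one.1 <|
    hη.finrank_radicalOn_le_one hnondeg (hH.trans (finrank_fin_fun F).symm)
  · exact Or.inl (h ▸ hcone)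
  · exact Or.inr (h ▸ hcone)

end HermitianVarieties

section EvenDimension

open scoped Classical Finset

variable {F : Type} [Field F] [Fintype F] {m q : ℕ} {f : MvPolynomial (Fin (2 * m + 1)) F}
  {W : Submodule F (Fin (2 * m + 1) → F)}

theorem card_zeros_mem_eq_pow (hcard : Fintype.card F = q ^ 2) (hf : f.IsHomogeneous (q + 1))
    (hW : (hypersurfacePts f ∩ projPts W).ncard = ∑ i ∈ Finset.range m, q ^ (2 * i)) :
    #{v | v ∈ W ∧ eval v f = 0} = (q ^ 2) ^ m := by
  have hq : 1 ≤ q ^ 2 := hcard ▸ Fintype.card_pos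
  rw [card_zeros_mem hf q.succ_ne_zero, hcard, hW, mul_comm]
  simp only [pow_mul]
  rw [geom_sum_mul_of_one_le hq, Nat.sub_add_cancel (Nat.one_le_pow _ _ hq)]

theorem mul_card_zeros_notMem (hcard : Fintype.card F = q ^ 2) (hf : f.IsHomogeneous (q + 1))
    (hcardS : (hypersurfacePts f).ncard =
      (q ^ (2 * m + 1) + 1) * ∑ i ∈ Finset.range m, q ^ (2 * i))
    (hWdim : finrank F W = m + 1)
    (hW : (hypersurfacePts f ∩ projPts W).ncard = ∑ i ∈ Finset.range m, q ^ (2 * i)) :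
    q * #{z | z ∉ W ∧ eval z f = 0} = #{z | z ∉ W} := by
  have hpow := card_zeros_mem_eq_pow hcard hf hW
  have hWzeros := card_zeros_mem hf q.succ_ne_zero W
  have hzeros := card_zeros_mem hf q.succ_ne_zero ⊤
  have htop : hypersurfacePts f ∩ projPts ⊤ = hypersurfacePts f :=
    Set.inter_eq_left.2 fun P _ => (le_top : P.submodule ≤ ⊤)
  simp only [htop, Submodule.mem_top, true_and, hcardS] at hzeros
  have hsplit : #{z | z ∈ W ∧ eval z f = 0} + #{z | z ∉ W ∧ eval z f = 0} =
      #{z | eval z f = 0} := by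
    simpa only [Finset.filter_filter, and_comm] using
      Finset.card_filter_add_card_filter_not (s := {z | eval z f = 0}) (· ∈ W)
  have hcompl : #{z | z ∈ W} + #{z | z ∉ W} = q ^ (2 * (2 * m + 1)) := by
    rw [Finset.card_filter_add_card_filter_not, Finset.card_univ, Fintype.card_fun, hcard,
      Fintype.card_fin, pow_mul]
  have hWcard : #{z | z ∈ W} = q ^ (2 * m + 2) := by
    rw [← Fintype.card_subtype, ← Nat.card_eq_fintype_card]
    exact (natCard_eq_pow_finrank (K := F) (V := W)).trans <| by
      rw [Nat.card_eq_fintype_card, hcard, hWdim, ← pow_mul, mul_add_one]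
  rw [hW, hpow] at hWzeros
  have hout : #{z | z ∉ W ∧ eval z f = 0} + q ^ (2 * m + 1) = q ^ (2 * m + 1) * (q ^ 2) ^ m := by
    rw [hWzeros]
    linarith
  linear_combination q * hout + hWcard - hcompl

theorem stmt_13_general {F : Type} [Field F] [Fintype F] {m q : ℕ}
    {f : MvPolynomial (Fin (2 * m + 1)) F} (hcard : Fintype.card F = q ^ 2) (hq : 2 < q)
    (hm : 2 ≤ m) (hf : f.IsHomogeneous (q + 1))
    (hmax : ¬ ∃ W : Submodule F (Fin (2 * m + 1) → F), finrank F W = m + 1 ∧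
      projPts W ⊆ hypersurfacePts f)
    (hcardS : (hypersurfacePts f).ncard =
      (q ^ (2 * m + 1) + 1) * ∑ i ∈ Finset.range m, q ^ (2 * i))
    (hsub : ∃ W : Submodule F (Fin (2 * m + 1) → F), finrank F W = m + 1 ∧
      (hypersurfacePts f ∩ projPts W).ncard = ∑ i ∈ Finset.range m, q ^ (2 * i))
    (H : Submodule F (Fin (2 * m + 1) → F)) (hH : finrank F H = 2 * m) :
    IsHermitianConeOn q H 0 (hypersurfacePts f ∩ projPts H) ∨
      IsHermitianConeOn q H 1 (hypersurfacePts f ∩ projPts H) := by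
  obtain ⟨W, hWdim, hW⟩ := hsub
  have hWcard : Fintype.card F * {v | v ∈ W ∧ eval v f = 0}.ncard = Nat.card W := by
    rw [← Finset.coe_filter_univ, Set.ncard_coe_finset, card_zeros_mem_eq_pow hcard hf hW,
      natCard_eq_pow_finrank (K := F) (V := W), hWdim, Nat.card_eq_fintype_card, hcard,
      pow_succ' (q ^ 2)]
  obtain ⟨η, e, he, hη, hdiag, hnondeg⟩ :=
    exists_nondegenerate_isHermitianForm hcard hq hf
      (by rw [hWdim, Fintype.card_fin]; lia) (by lia)
      hWcard
      (by convert mul_card_zeros_notMem hcard hf hcardS hWdim hW)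
      (fun M hM => by
        by_contra! hzero
        exact hmax ⟨M, hM.trans hWdim, fun P hP => hzero _ (mem_projPts.1 hP)⟩)
  exact isHermitianConeOn_zero_or_one hη he hdiag hnondeg (by rw [hH])

end EvenDimension

/-- Under the hypotheses of the main theorem, every hyperplane of `PG(6,q²)` meets `S`
either in a non-singular Hermitian variety `H(5,q²)` (radical of dimension `0`) or in a
Hermitian cone with vertex a point over a non-singular Hermitian variety `H(4,q²)`
(radical of dimension `1`). -/
theorem stmt_13 (q : ℕ) (hq : ∃ p k : ℕ, p.Prime ∧ 0 < k ∧ q = p ^ k) (hq2 : 2 < q)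
    (F : Type) [Field F] [Fintype F] (hcardF : Fintype.card F = q ^ 2)
    (f : MvPolynomial (Fin 7) F) (hf0 : f ≠ 0) (hfdeg : f.IsHomogeneous (q + 1))
    (S : Set (Projectivization F (Fin 7 → F))) (hS : S = hypersurfacePts f)
    (hnosolid : ¬ ∃ W : Submodule F (Fin 7 → F), Module.finrank F W = 4 ∧ projPts W ⊆ S)
    (hcardS : S.ncard = q ^ 11 + q ^ 9 + q ^ 7 + q ^ 4 + q ^ 2 + 1)
    (hsolid : ∃ W : Submodule F (Fin 7 → F), Module.finrank F W = 4 ∧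
      (S ∩ projPts W).ncard = q ^ 4 + q ^ 2 + 1) :
    ∀ H : Submodule F (Fin 7 → F), Module.finrank F H = 6 →
      IsHermitianConeOn q H 0 (S ∩ projPts H) ∨
      IsHermitianConeOn q H 1 (S ∩ projPts H) := by
  subst hS
  have hsum : ∑ i ∈ Finset.range 3, q ^ (2 * i) = q ^ 4 + q ^ 2 + 1 := by
    simp only [Finset.sum_range_succ, Finset.sum_range_zero]
    ring
  exact stmt_13_general (m := 3) hcardF hq2 (by lia) hfdeg hnosolid
    (by rw [hcardS, hsum]; ring) (by rwa [hsum])
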